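/- Let N≥1, let K:[0,T]×ℝ^N×ℝ^N→[0,∞) satisfy the weak-(*)-kernel condition, let 0<T̄<T be finite, and define the backward kernel K^{(T̄)}(s,x,y) := K(T̄−s,x,y). Let w, φ ∈ L^∞(0,T̄;(L¹∩L^∞)(ℝ^N)) be smooth solutions on [0,T̄] of ∂ₜw + T^K_t(w(t,·)) = 0 and ∂ₜφ + T^{K^{(T̄)}}_t(φ(t,·)) = 0, with smooth initial data w₀, φ₀ ∈ (L¹∩L^∞)(ℝ^N) respectively, and assume φ₀ ∈ 𝒰_r∩𝒮(ℝ^N) for some r∈(0,1]. Then ∫_{ℝ^N} w₀(x)·φ(T̄,x) dx = ∫_{ℝ^N} w(T̄,x)·φ₀(x) dx. -/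

import Mathlib

/-!
Put `ψ(t) = φ(T̄ - t)` and let `L` denote the operator with kernel `K t`, so that `∂ₜ w = -L w` and
`∂ₜ ψ = L ψ`. Formally `d/dt ∫ w ψ = ∫ (-ψ L w + w L ψ) = 0` by the symmetry of `K`, and `t = 0` and
`t = T̄` give the two sides of the identity. The difficulty is that `L w` is only a pointwise
principal value, without any decay at infinity, so the pairing has to be localized with a cutoff
`η = (1 - |x|/R)₊`, and the resulting commutator contains differences of `w` and `ψ` which the
`L¹ ∩ L^∞` bounds do not control against the singular kernel.

The commutator is absorbed by dissipation. For `s = ±1` and `δ > 0` consider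
`J(t) = ∫ η² (s w ψ + δ w² - δ ψ²)`. The quadratic terms contribute `-2δ ∫ η² (w L w + ψ L ψ)` to
`J'`, and after symmetrization of the double integrals Young's inequality yields
`J' ≤ (δ⁻¹ + 2δ) Q(R) ∫ (w² + ψ²)`, where
`Q(R) = ∫ min(1, |z|²/R²) Λ(1 + |z|^ω) |z|^{-(N+α)} dz` tends to `0` as `R → ∞` (`pointwise_energy`,
`energy_ineq`, `tendsto_cutoffModulus`). Integrating in time, then letting `R → ∞` and `δ → 0`, gives
`s (∫ w(T̄) ψ(T̄) - ∫ w(0) ψ(0)) ≤ 0` for both signs (`pairing_conserved`).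

The energy inequality is proved for the operators truncated at `|x - y| ≥ ε`, where all double
integrals converge absolutely. Passing to the limit `ε → 0` requires bounds of the truncated
operators that are uniform in `ε` and locally uniform in `x` (`truncOp_bound`). By Taylor expansion
these reduce to a bound for the truncated first moments `∫_{ε ≤ |z| < s₁} z K(t,x,x+z) dz`. For
`α < 1` the moment converges absolutely; for `α ≥ 1` it is controlled by the cancellation condition
in polar coordinates (`goodKernel_of_weakStar`). The cancellation condition is formulated with the
Hausdorff measure of the sphere, whereas polar coordinates use `Measure.toSphere`; the two are
proportional because both are finite and assign equal mass to caps of equal radius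
(`uniform_measure_unique`, `exists_toSphere_eq`).
-/

open MeasureTheory Filter Set
open scoped ENNReal NNReal

noncomputable section

/-- The principal value integral statement `T^K_t f x = L`, i.e.
`lim_{ε→0⁺} ∫_{|x−y|≥ε} [f(x)−f(y)] K(t,x,y) dy = L`. -/
def HasPVIntegral (N : ℕ)
    (K : ℝ → EuclideanSpace ℝ (Fin N) → EuclideanSpace ℝ (Fin N) → ℝ) (t : ℝ)
    (f : EuclideanSpace ℝ (Fin N) → ℝ) (x : EuclideanSpace ℝ (Fin N)) (L : ℝ) : Prop :=
  Filter.Tendsto (fun ε : ℝ =>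
      ∫ y in {y : EuclideanSpace ℝ (Fin N) | ε ≤ ‖x - y‖}, (f x - f y) * K t x y)
    (nhdsWithin 0 (Set.Ioi 0)) (nhds L)

/-- The associated function `k(t,x,z) := K(t,x,x+z)·|z|^{N+α}`. -/
def kAssoc (N : ℕ) (α : ℝ)
    (K : ℝ → EuclideanSpace ℝ (Fin N) → EuclideanSpace ℝ (Fin N) → ℝ)
    (t : ℝ) (x z : EuclideanSpace ℝ (Fin N)) : ℝ :=
  K t x (x + z) * ‖z‖ ^ ((N : ℝ) + α)

/-- The vector-valued integral `∫_{S^{N−1}} g(σ)·σ dσ` over the unit sphere,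
with respect to the (N−1)-dimensional Hausdorff (surface) measure. -/
def sphereVecInt (N : ℕ) (g : EuclideanSpace ℝ (Fin N) → ℝ) : EuclideanSpace ℝ (Fin N) :=
  ∫ σ in Metric.sphere (0 : EuclideanSpace ℝ (Fin N)) 1, g σ • σ ∂(μH[(N : ℝ) - 1])

/-- The weak-(*)-kernel condition on the time interval `[0,T]` (with `T ∈ (0,∞]`). -/
structure WeakStarKernel (N : ℕ) (T : ℝ≥0∞)
    (K : ℝ → EuclideanSpace ℝ (Fin N) → EuclideanSpace ℝ (Fin N) → ℝ)
    (α : ℝ) (ζ : ℝ≥0∞) (ω Λ ν : ℝ) (s₀ : ℝ≥0∞) (τ : ℝ) : Prop where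
  measurable : Measurable fun p : ℝ × EuclideanSpace ℝ (Fin N) × EuclideanSpace ℝ (Fin N) =>
    K p.1 p.2.1 p.2.2
  nonneg : ∀ t x y, 0 ≤ K t x y
  symm : ∀ t x y, 0 ≤ t → ENNReal.ofReal t ≤ T → K t x y = K t y x
  lower : ∀ t x y, 0 ≤ t → ENNReal.ofReal t ≤ T → x ≠ y → ENNReal.ofReal ‖x - y‖ ≤ ζ →
    Λ⁻¹ ≤ K t x y * ‖x - y‖ ^ ((N : ℝ) + α)
  upper : ∀ t x y, 0 ≤ t → ENNReal.ofReal t ≤ T → x ≠ y →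
    K t x y * ‖x - y‖ ^ ((N : ℝ) + α) ≤ Λ * (1 + ‖x - y‖ ^ ω)
  cancel : 1 ≤ α → ∀ t x (s : ℝ), 0 ≤ t → ENNReal.ofReal t ≤ T → 0 < s →
    ENNReal.ofReal s < s₀ →
    ‖sphereVecInt N (fun σ => kAssoc N α K t x (s • σ))‖ ≤ τ * s ^ ν

/-- The (*)-kernel condition on the time interval `[0,T]` (with `T ∈ (0,∞]`):
as the weak condition, but with the local Hölder continuity of `k` replacing
the cancellation condition when `α ≥ 1`. -/
structure StarKernel (N : ℕ) (T : ℝ≥0∞)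
    (K : ℝ → EuclideanSpace ℝ (Fin N) → EuclideanSpace ℝ (Fin N) → ℝ)
    (α : ℝ) (ζ : ℝ≥0∞) (ω Λ ν : ℝ) (s₀ : ℝ≥0∞) (τ : ℝ) : Prop where
  measurable : Measurable fun p : ℝ × EuclideanSpace ℝ (Fin N) × EuclideanSpace ℝ (Fin N) =>
    K p.1 p.2.1 p.2.2
  nonneg : ∀ t x y, 0 ≤ K t x y
  symm : ∀ t x y, 0 ≤ t → ENNReal.ofReal t ≤ T → K t x y = K t y x
  lower : ∀ t x y, 0 ≤ t → ENNReal.ofReal t ≤ T → x ≠ y → ENNReal.ofReal ‖x - y‖ ≤ ζ →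
    Λ⁻¹ ≤ K t x y * ‖x - y‖ ^ ((N : ℝ) + α)
  upper : ∀ t x y, 0 ≤ t → ENNReal.ofReal t ≤ T → x ≠ y →
    K t x y * ‖x - y‖ ^ ((N : ℝ) + α) ≤ Λ * (1 + ‖x - y‖ ^ ω)
  holder : 1 ≤ α → ∀ t x z z', 0 ≤ t → ENNReal.ofReal t ≤ T →
    ENNReal.ofReal ‖z - z'‖ ≤ s₀ → ENNReal.ofReal ‖z‖ ≤ s₀ →
    |kAssoc N α K t x z - kAssoc N α K t x z'| ≤ τ * ‖z - z'‖ ^ ν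

/-- `f : ℝ^N → F` together with all of its derivatives is smooth and bounded,
i.e. `f ∈ C^∞(overline{ℝ^N})`. -/
def SmoothBounded {X F : Type*} [NormedAddCommGroup X] [NormedSpace ℝ X]
    [NormedAddCommGroup F] [NormedSpace ℝ F] (f : X → F) : Prop :=
  ContDiff ℝ (⊤ : ℕ∞) f ∧ ∀ n : ℕ, ∃ C : ℝ, ∀ x, ‖iteratedFDeriv ℝ n f x‖ ≤ C

/-- `sup_x ‖f x‖` as an extended real number (the `L^∞`-norm for continuous `f`). -/
def supENorm {X F : Type*} [NormedAddCommGroup F] (f : X → F) : ℝ≥0∞ :=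
  ⨆ x, ENNReal.ofReal ‖f x‖

/-- The Hölder seminorm `[f]_{C^β} = sup_{x≠y} ‖f x − f y‖/‖x−y‖^β`
as an extended real number. -/
def holderSemiENorm {X F : Type*} [NormedAddCommGroup X] [NormedAddCommGroup F]
    (β : ℝ) (f : X → F) : ℝ≥0∞ :=
  ⨆ x, ⨆ y, ENNReal.ofReal (‖f x - f y‖ / ‖x - y‖ ^ β)

/-- The Hölder norm `‖f‖_{C^β} = ‖f‖_{L^∞} + [f]_{C^β}` as an extended real number. -/
def holderENorm {X F : Type*} [NormedAddCommGroup X] [NormedAddCommGroup F]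
    (β : ℝ) (f : X → F) : ℝ≥0∞ :=
  supENorm f + holderSemiENorm β f

/-- `w` is a (pointwise/classical) solution of `∂ₜ w + T^K_t(w(t,·)) = 0` on `[0,T)×ℝ^N`. -/
def IsLinSolution (N : ℕ) (T : ℝ≥0∞)
    (K : ℝ → EuclideanSpace ℝ (Fin N) → EuclideanSpace ℝ (Fin N) → ℝ)
    (w : ℝ → EuclideanSpace ℝ (Fin N) → ℝ) : Prop :=
  ∀ t x, 0 ≤ t → ENNReal.ofReal t < T →
    ∃ L : ℝ, HasPVIntegral N K t (w t) x L ∧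
      HasDerivWithinAt (fun s => w s x) (-L) (Set.Ici 0) t

/-- `w(t,x)` is smooth on `[0,T)×ℝ^N`. -/
def SmoothOnDomain (N : ℕ) (T : ℝ≥0∞) (w : ℝ → EuclideanSpace ℝ (Fin N) → ℝ) : Prop :=
  ContDiffOn ℝ (⊤ : ℕ∞) (fun p : ℝ × EuclideanSpace ℝ (Fin N) => w p.1 p.2)
    {p : ℝ × EuclideanSpace ℝ (Fin N) | 0 ≤ p.1 ∧ ENNReal.ofReal p.1 < T}

/-- `w ∈ L^∞(0,T;(L¹∩L^∞)(ℝ^N))`. -/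
def BddL1Linfty (N : ℕ) (T : ℝ≥0∞) (w : ℝ → EuclideanSpace ℝ (Fin N) → ℝ) : Prop :=
  ∃ C : ℝ, ∀ t, 0 ≤ t → ENNReal.ofReal t < T →
    (∫⁻ x, ENNReal.ofReal |w t x| ≤ ENNReal.ofReal C) ∧ ∀ x, |w t x| ≤ C

/-- The class `𝒰_r` of test functions (for fixed constants `γ` and `A`). -/
def MemU (N : ℕ) (γ A : ℝ) (r : ℝ) (φ : EuclideanSpace ℝ (Fin N) → ℝ) : Prop :=
  Measurable φ ∧ Integrable φ ∧ (∫ x, φ x) = 0 ∧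
    (∃ x₀ : EuclideanSpace ℝ (Fin N),
      ∫⁻ x, ENNReal.ofReal (|φ x| * ‖x - x₀‖ ^ γ) ≤ ENNReal.ofReal (r ^ γ)) ∧
    (∀ x, |φ x| ≤ A / r ^ (N : ℝ)) ∧ (∫⁻ x, ENNReal.ofReal |φ x|) ≤ 1

/-- `φ` is (the restriction to `ℝ^N` of) a Schwartz function. -/
def IsSchwartz (N : ℕ) (φ : EuclideanSpace ℝ (Fin N) → ℝ) : Prop :=
  ∃ ψ : SchwartzMap (EuclideanSpace ℝ (Fin N)) ℝ, ⇑ψ = φ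

/-- The volume of the unit ball in `ℝ^N`. -/
def ballVol (N : ℕ) : ℝ := (volume (Metric.ball (0 : EuclideanSpace ℝ (Fin N)) 1)).toReal

/-- The special radius `ζ₀ := max{(8/V_N)^{1/N}, 2·11^{1/γ}}`. -/
def zeta0 (N : ℕ) (γ : ℝ) : ℝ :=
  max ((8 / ballVol N) ^ (N : ℝ)⁻¹) (2 * 11 ^ γ⁻¹)

/-! ### Uniformly distributed measures -/

section SphereMeasure

/-- Two finite measures on a compact metric space for which the measure of a ball depends only on
its radius are proportional, as functionals on bounded continuous functions. The proof compares, by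
Fubini, the averages of `f` over small balls with the two integrals. -/
theorem uniform_measure_unique {X : Type*} [MetricSpace X] [CompactSpace X] [MeasurableSpace X]
    [BorelSpace X] (μ ν : Measure X) [IsFiniteMeasure μ] [IsFiniteMeasure ν]
    (hμ0 : μ ≠ 0)
    (hμ : ∀ r x y, μ (Metric.ball x r) = μ (Metric.ball y r))
    (hν : ∀ r x y, ν (Metric.ball x r) = ν (Metric.ball y r)) :
    ∀ f : BoundedContinuousFunction X ℝ,
      μ.real univ * ∫ x, f x ∂ν = ν.real univ * ∫ x, f x ∂μ := by
  intro f
  have hne : Nonempty X := by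
    by_contra h
    rw [not_nonempty_iff] at h
    exact hμ0 (Measure.eq_zero_of_isEmpty μ)
  obtain ⟨x₀⟩ := hne
  -- balls have positive measure
  have hpos : ∀ r, 0 < r → 0 < μ.real (Metric.ball x₀ r) := by
    intro r hr
    rw [measureReal_def, ENNReal.toReal_pos_iff]
    refine ⟨pos_iff_ne_zero.2 fun h0 => hμ0 ?_, measure_lt_top _ _⟩
    obtain ⟨t, ht⟩ := isCompact_univ.elim_finite_subcover (fun x : X => Metric.ball x r)
      (fun x => Metric.isOpen_ball) (fun x _ => mem_iUnion.2 ⟨x, Metric.mem_ball_self hr⟩)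
    rw [← Measure.measure_univ_eq_zero]
    refine measure_mono_null ht ?_
    refine (measure_biUnion_null_iff t.countable_toSet).2 fun x _ => ?_
    rw [hμ r x x₀, h0]
  have hker : ∀ r : ℝ, MeasurableSet {p : X × X | dist p.1 p.2 < r} := fun r =>
    (isOpen_lt continuous_dist continuous_const).measurableSet
  -- the two iterated integrals of `f(x) 1_{|x-y|<r}`
  have key : ∀ (g : BoundedContinuousFunction X ℝ) (r : ℝ),
      ∫ y, (∫ x in Metric.ball y r, g x ∂ν) ∂μ = μ.real (Metric.ball x₀ r) * ∫ x, g x ∂ν := by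
    intro g r
    have e1 : ∀ y, ∫ x in Metric.ball y r, g x ∂ν
        = ∫ x, {p : X × X | dist p.1 p.2 < r}.indicator (fun p => g p.2) (y, x) ∂ν := by
      intro y
      rw [← integral_indicator Metric.isOpen_ball.measurableSet]
      refine integral_congr_ae (Eventually.of_forall fun x => ?_)
      simp only [indicator, Metric.mem_ball, mem_ofPred_eq, dist_comm]
    simp_rw [e1]
    rw [integral_integral_swap]
    · have e2 : ∀ x, ∫ y, {p : X × X | dist p.1 p.2 < r}.indicator (fun p => g p.2) (y, x) ∂μ
          = μ.real (Metric.ball x₀ r) * g x := by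
        intro x
        have : (fun y => {p : X × X | dist p.1 p.2 < r}.indicator (fun p => g p.2) (y, x))
            = (Metric.ball x r).indicator (fun _ => g x) := by
          ext y
          simp only [indicator, Metric.mem_ball, mem_ofPred_eq]
        rw [this, integral_indicator Metric.isOpen_ball.measurableSet, setIntegral_const,
          measureReal_def, hμ r x x₀]
        rfl
      simp_rw [e2]
      rw [integral_const_mul]
    · refine Integrable.indicator ?_ (hker r)
      exact (g.integrable ν).comp_snd μ
  have huni : ∀ r, μ.real univ * ν.real (Metric.ball x₀ r)
      = ν.real univ * μ.real (Metric.ball x₀ r) := by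
    intro r
    have := key (BoundedContinuousFunction.const X 1) r
    simp only [BoundedContinuousFunction.const_apply, integral_const, smul_eq_mul, mul_one,
      measureReal_restrict_apply_univ] at this
    have h2 : ∀ y, ν.real (Metric.ball y r) = ν.real (Metric.ball x₀ r) := fun y => by
      rw [measureReal_def, hν r y x₀]; rfl
    simp_rw [h2] at this
    rw [integral_const, smul_eq_mul] at this
    rw [this]; ring
  -- the averages of `f` are compared up to an arbitrarily small error
  refine eq_of_forall_dist_le fun ε hε => ?_
  rw [Real.dist_eq]
  set B := ν.real univ * μ.real univ + 1 with hB
  have hBpos : 0 < B := by positivity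
  have huc : UniformContinuous f := CompactSpace.uniformContinuous_of_continuous f.continuous
  obtain ⟨r, hr, hrf⟩ := Metric.uniformContinuous_iff.1 huc (ε / B) (by positivity)
  have hh := hpos r hr
  set h := μ.real (Metric.ball x₀ r)
  set g := ν.real (Metric.ball x₀ r)
  have hbd : ∀ y, |(∫ x in Metric.ball y r, f x ∂ν) - g * f y| ≤ g * (ε / B) := by
    intro y
    have h2 : ν.real (Metric.ball y r) = g := by
      rw [measureReal_def, hν r y x₀]; rfl
    have : g * f y = ∫ x in Metric.ball y r, f y ∂ν := by
      rw [setIntegral_const, h2]; rfl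
    rw [this, ← integral_sub ((f.integrable ν).integrableOn) (integrable_const _)]
    have := norm_setIntegral_le_of_norm_le_const (μ := ν) (s := Metric.ball y r)
      (f := fun x => f x - f y) (C := ε / B) (measure_lt_top _ _) (fun x hx => by
        have := hrf (Metric.mem_ball.1 hx)
        rw [Real.dist_eq] at this
        exact this.le)
    rw [h2] at this
    rw [mul_comm]; exact this
  have hmeas : Integrable (fun y => ∫ x in Metric.ball y r, f x ∂ν) μ := by
    refine Integrable.of_bound (C := g * (ε / B) + g * ‖f‖) ?_ (Eventually.of_forall fun y => ?_)
    · have e1 : ∀ y, ∫ x in Metric.ball y r, f x ∂ν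
          = ∫ x, {p : X × X | dist p.1 p.2 < r}.indicator (fun p => f p.2) (y, x) ∂ν := by
        intro y
        rw [← integral_indicator Metric.isOpen_ball.measurableSet]
        refine integral_congr_ae (Eventually.of_forall fun x => ?_)
        simp only [indicator, Metric.mem_ball, mem_ofPred_eq, dist_comm]
      simp_rw [e1]
      refine (StronglyMeasurable.integral_prod_right' ?_).aestronglyMeasurable
      exact (f.continuous.comp continuous_snd).stronglyMeasurable.indicator (hker r)
    · have h1 := hbd y
      have h2 : |g * f y| ≤ g * ‖f‖ := by
        rw [abs_mul, abs_of_nonneg measureReal_nonneg]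
        gcongr
        exact f.norm_coe_le_norm y
      rw [Real.norm_eq_abs]
      calc _ = |((∫ x in Metric.ball y r, f x ∂ν) - g * f y) + g * f y| := by ring_nf
        _ ≤ _ := (abs_add_le _ _).trans (add_le_add h1 h2)
  have hint : |h * (∫ x, f x ∂ν) - g * ∫ y, f y ∂μ| ≤ g * (ε / B) * μ.real univ := by
    rw [← key f r, ← integral_const_mul, ← integral_sub hmeas ((f.integrable μ).const_mul g)]
    rw [← Real.norm_eq_abs]
    exact norm_integral_le_of_norm_le_const (Eventually.of_forall fun y => by
      rw [Real.norm_eq_abs]; exact hbd y)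
  have hu := huni r
  have : |μ.real univ * (∫ x, f x ∂ν) - ν.real univ * ∫ x, f x ∂μ| * h
      ≤ ε * h := by
    calc |μ.real univ * (∫ x, f x ∂ν) - ν.real univ * ∫ x, f x ∂μ| * h
        = |μ.real univ * (h * (∫ x, f x ∂ν) - g * ∫ y, f y ∂μ)| := by
          rw [← abs_of_pos hh, ← abs_mul, abs_of_pos hh]
          congr 1
          linear_combination (∫ x, f x ∂μ) * hu
      _ = μ.real univ * |h * (∫ x, f x ∂ν) - g * ∫ y, f y ∂μ| := by
          rw [abs_mul, abs_of_nonneg measureReal_nonneg]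
      _ ≤ μ.real univ * (g * (ε / B) * μ.real univ) := by gcongr
      _ = h * (ε * (ν.real univ * μ.real univ / B)) := by
          field_simp
          linear_combination (μ.real univ) * hu
      _ ≤ h * (ε * 1) := by
          gcongr
          rw [div_le_one hBpos, hB]; linarith
      _ = ε * h := by ring
  exact le_of_mul_le_mul_right this hh

end SphereMeasure

/-! ### The surface measure of the sphere -/

section SphereHausdorff

theorem norm_normalize_sub_le {E : Type*} [NormedAddCommGroup E] [NormedSpace ℝ E]
    {a b : E} (ha : 1 ≤ ‖a‖) (hb : 1 ≤ ‖b‖) :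
    ‖‖a‖⁻¹ • a - ‖b‖⁻¹ • b‖ ≤ 2 * ‖a - b‖ := by
  have ha0 : 0 < ‖a‖ := by linarith
  have hb0 : 0 < ‖b‖ := by linarith
  have e : ‖a‖⁻¹ • a - ‖b‖⁻¹ • b = ‖a‖⁻¹ • (a - b) + (‖a‖⁻¹ - ‖b‖⁻¹) • b := by
    rw [smul_sub, sub_smul]; abel
  have h1 : ‖‖a‖⁻¹ • (a - b)‖ ≤ ‖a - b‖ := by
    rw [norm_smul, norm_inv, norm_norm]
    exact mul_le_of_le_one_left (norm_nonneg _) (inv_le_one_of_one_le₀ ha)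
  have h2 : ‖(‖a‖⁻¹ - ‖b‖⁻¹) • b‖ ≤ ‖a - b‖ := by
    have : (‖a‖⁻¹ - ‖b‖⁻¹) * ‖b‖ = ‖a‖⁻¹ * (‖b‖ - ‖a‖) := by field_simp
    rw [norm_smul, ← norm_norm b, ← norm_mul, norm_norm, this, norm_mul, norm_inv, norm_norm,
      norm_sub_rev a b]
    exact (mul_le_of_le_one_left (norm_nonneg _) (inv_le_one_of_one_le₀ ha)).trans
      (abs_norm_sub_norm_le b a)
  rw [e]
  linarith [norm_add_le (‖a‖⁻¹ • (a - b)) ((‖a‖⁻¹ - ‖b‖⁻¹) • b)]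

/-- The sphere is covered by the radial projections of the faces of the cube, which are Lipschitz
images of cubes in dimension `n`. -/
theorem hausdorffMeasure_sphere_lt_top (n : ℕ) :
    μH[(n : ℝ)] (Metric.sphere (0 : EuclideanSpace ℝ (Fin (n + 1))) 1) < ⊤ := by
  let p : Fin (n + 1) → ℝ → (Fin n → ℝ) → EuclideanSpace ℝ (Fin (n + 1)) :=
    fun i c v => WithLp.toLp 2 (i.insertNth c v)
  let F : Fin (n + 1) → ℝ → (Fin n → ℝ) → EuclideanSpace ℝ (Fin (n + 1)) :=
    fun i c v => ‖p i c v‖⁻¹ • p i c v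
  have hcard : μH[(n : ℝ)] = (volume : Measure (Fin n → ℝ)) := by
    have := hausdorffMeasure_pi_real (ι := Fin n)
    rwa [Fintype.card_fin] at this
  have hp : ∀ i c v, |c| = 1 → 1 ≤ ‖p i c v‖ := by
    intro i c v hc
    have := PiLp.norm_apply_le (p i c v) i
    simpa [p, hc] using this
  have hlip : ∀ i c, |c| = 1 → ∃ L : ℝ≥0, LipschitzWith L (F i c) := by
    intro i c hc
    obtain ⟨L, hL⟩ : ∃ L : ℝ≥0, LipschitzWith L (p i c) := by
      refine ⟨_, (PiLp.lipschitzWith_toLp 2 (fun _ : Fin (n + 1) => ℝ)).comp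
        (LipschitzWith.of_dist_le_mul (K := 1) fun v v' => ?_)⟩
      rw [NNReal.coe_one, one_mul, dist_pi_le_iff dist_nonneg]
      intro j
      refine Fin.succAboveCases i ?_ ?_ j
      · simp
      · intro k; simpa using dist_le_pi_dist v v' k
    refine ⟨2 * L, LipschitzWith.of_dist_le_mul fun v v' => ?_⟩
    rw [dist_eq_norm]
    refine (norm_normalize_sub_le (hp i c v hc) (hp i c v' hc)).trans ?_
    rw [← dist_eq_norm]
    have := hL.dist_le_mul v v'
    push_cast
    linarith
  have hfin : ∀ i c, |c| = 1 → μH[(n : ℝ)] (F i c '' Metric.closedBall 0 1) < ⊤ := by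
    intro i c hc
    obtain ⟨L, hL⟩ := hlip i c hc
    refine (hL.hausdorffMeasure_image_le (Nat.cast_nonneg n) _).trans_lt ?_
    rw [hcard]
    refine ENNReal.mul_lt_top ?_ measure_closedBall_lt_top
    exact ENNReal.rpow_lt_top_of_nonneg (Nat.cast_nonneg n) ENNReal.coe_ne_top
  have hcover : Metric.sphere (0 : EuclideanSpace ℝ (Fin (n + 1))) 1 ⊆
      ⋃ i : Fin (n + 1), (F i 1 '' Metric.closedBall 0 1 ∪ F i (-1) '' Metric.closedBall 0 1) := by
    intro x hx
    have hx1 : ‖x‖ = 1 := by simpa using hx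
    obtain ⟨i, -, hi⟩ := Finset.exists_max_image Finset.univ (fun j => |x j|) Finset.univ_nonempty
    have hxi : 0 < |x i| := by
      by_contra h0
      have : x = 0 := by
        ext j
        have := hi j (Finset.mem_univ _)
        have h3 := abs_nonneg (x j)
        simp only [PiLp.zero_apply]
        exact abs_eq_zero.1 (by linarith)
      rw [this] at hx1
      simp at hx1
    have hmain : ∀ c, |c| = 1 → |x i| * c = x i → x ∈ F i c '' Metric.closedBall 0 1 := by
      intro c hc hcx
      refine ⟨fun k => |x i|⁻¹ * x (i.succAbove k), ?_, ?_⟩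
      · rw [mem_closedBall_zero_iff, pi_norm_le_iff_of_nonneg zero_le_one]
        intro k
        rw [Real.norm_eq_abs, abs_mul, abs_inv, abs_abs, inv_mul_le_one₀ hxi]
        exact hi _ (Finset.mem_univ _)
      · have hpe : p i c (fun k => |x i|⁻¹ * x (i.succAbove k)) = |x i|⁻¹ • x := by
          ext j
          refine Fin.succAboveCases i ?_ ?_ j
          · simp only [p, Fin.insertNth_apply_same, PiLp.smul_apply, smul_eq_mul]
            field_simp
            linarith
          · intro k; simp [p]
        simp only [F]
        rw [hpe, norm_smul, hx1, smul_smul, norm_inv, Real.norm_eq_abs, abs_abs]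
        field_simp
        simp
    refine mem_iUnion.2 ⟨i, ?_⟩
    rcases le_total 0 (x i) with h | h
    · left; exact hmain 1 (by simp) (by rw [abs_of_nonneg h, mul_one])
    · right; exact hmain (-1) (by simp) (by rw [abs_of_nonpos h]; ring)
  refine (measure_mono hcover).trans_lt ?_
  refine (measure_iUnion_fintype_le _ _).trans_lt ?_
  refine ENNReal.sum_lt_top.2 fun i _ => ?_
  exact (measure_union_le _ _).trans_lt
    (ENNReal.add_lt_top.2 ⟨hfin i 1 (by simp), hfin i (-1) (by simp)⟩)

/-- The projection forgetting the last coordinate is Lipschitz, and it maps the sphere onto a set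
containing a ball. -/
theorem hausdorffMeasure_sphere_pos (n : ℕ) :
    0 < μH[(n : ℝ)] (Metric.sphere (0 : EuclideanSpace ℝ (Fin (n + 1))) 1) := by
  have hcard : μH[(n : ℝ)] = (volume : Measure (Fin n → ℝ)) := by
    have := hausdorffMeasure_pi_real (ι := Fin n)
    rwa [Fintype.card_fin] at this
  let P : EuclideanSpace ℝ (Fin (n + 1)) → (Fin n → ℝ) := fun x j => x j.castSucc
  have hP : LipschitzWith 1 P := by
    refine LipschitzWith.of_dist_le_mul fun x y => ?_
    rw [NNReal.coe_one, one_mul, dist_pi_le_iff dist_nonneg]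
    intro j
    rw [dist_eq_norm, dist_eq_norm]
    exact PiLp.norm_apply_le (x - y) j.castSucc
  have hsub : Metric.ball (0 : Fin n → ℝ) (1 / (n + 1)) ⊆
      P '' Metric.sphere (0 : EuclideanSpace ℝ (Fin (n + 1))) 1 := by
    intro v hv
    rw [mem_ball_zero_iff] at hv
    have hn : (0 : ℝ) < n + 1 := by positivity
    have hs : ∑ j, v j ^ 2 ≤ 1 := by
      calc ∑ j, v j ^ 2 ≤ ∑ j : Fin n, (1 / ((n : ℝ) + 1)) := by
            refine Finset.sum_le_sum fun j _ => ?_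
            have h1 : |v j| ≤ 1 / (n + 1) := (norm_le_pi_norm v j).trans hv.le
            have h2 : 1 / ((n : ℝ) + 1) ≤ 1 := by
              rw [div_le_one hn]; linarith [(Nat.cast_nonneg n : (0 : ℝ) ≤ n)]
            rw [← sq_abs]
            nlinarith [abs_nonneg (v j)]
        _ ≤ 1 := by
            rw [Finset.sum_const, Finset.card_univ, Fintype.card_fin, nsmul_eq_mul, mul_one_div,
              div_le_one hn]
            linarith
    refine ⟨WithLp.toLp 2 (Fin.snoc v (Real.sqrt (1 - ∑ j, v j ^ 2))), ?_, ?_⟩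
    · rw [mem_sphere_zero_iff_norm, EuclideanSpace.norm_eq, Real.sqrt_eq_one, Fin.sum_univ_castSucc]
      simp only [Fin.snoc_castSucc, Fin.snoc_last, Real.norm_eq_abs, sq_abs]
      rw [Real.sq_sqrt (by linarith)]
      ring
    · ext j; simp [P]
  have h1 := hP.hausdorffMeasure_image_le (Nat.cast_nonneg n)
    (Metric.sphere (0 : EuclideanSpace ℝ (Fin (n + 1))) 1)
  rw [hcard] at h1
  simp only [ENNReal.coe_one, ENNReal.one_rpow, one_mul] at h1
  refine lt_of_lt_of_le ?_ h1
  refine lt_of_lt_of_le ?_ (measure_mono hsub)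
  exact Metric.measure_ball_pos _ _ (by positivity)

open scoped Pointwise in
/-- The measure `toSphere` of polar coordinates is a multiple of the Hausdorff measure: both are
invariant under reflections, hence uniformly distributed on the sphere. This transfers the
cancellation condition, stated for the Hausdorff measure, to polar coordinates. -/
theorem exists_toSphere_eq (N : ℕ) (hN : 1 ≤ N) :
    ∃ c : ℝ, 0 ≤ c ∧ ∀ g : EuclideanSpace ℝ (Fin N) → EuclideanSpace ℝ (Fin N),
      ∫ σ : Metric.sphere (0 : EuclideanSpace ℝ (Fin N)) 1, g σ
          ∂(volume : Measure (EuclideanSpace ℝ (Fin N))).toSphere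
        = c • ∫ σ in Metric.sphere (0 : EuclideanSpace ℝ (Fin N)) 1, g σ ∂(μH[(N : ℝ) - 1]) := by
  obtain ⟨n, rfl⟩ : ∃ n, N = n + 1 := ⟨N - 1, by omega⟩
  have hcast : ((n + 1 : ℕ) : ℝ) - 1 = n := by push_cast; ring
  rw [hcast]
  set E := EuclideanSpace ℝ (Fin (n + 1)) with hE
  let S := Metric.sphere (0 : E) 1
  let μ : Measure S := μH[(n : ℝ)]
  let ν : Measure S := (volume : Measure E).toSphere
  have hiso : Isometry (Subtype.val : S → E) := isometry_subtype_coe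
  have hmap : Measure.map (Subtype.val : S → E) μ = μH[(n : ℝ)].restrict S := by
    have := hiso.map_hausdorffMeasure (d := (n : ℝ)) (Or.inl (Nat.cast_nonneg n))
    rwa [Subtype.range_coe] at this
  have hμuniv : μ univ = μH[(n : ℝ)] S := by
    have := hiso.hausdorffMeasure_image (d := (n : ℝ)) (Or.inl (Nat.cast_nonneg n)) univ
    rw [image_univ, Subtype.range_coe] at this
    exact this.symm
  have : IsFiniteMeasure μ := ⟨by rw [hμuniv]; exact hausdorffMeasure_sphere_lt_top n⟩
  have hμ0 : μ ≠ 0 := by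
    intro h
    have := hausdorffMeasure_sphere_pos n
    rw [← hμuniv, h] at this
    simp at this
  -- a reflection carries one spherical cap to another
  have hrefl : ∀ (r : ℝ) (x y : S), ∃ A : E ≃ₗᵢ[ℝ] E,
      (Subtype.val '' Metric.ball y r : Set E) = A '' (Subtype.val '' Metric.ball x r) := by
    intro r x y
    have hxy : ‖(x : E)‖ = ‖(y : E)‖ := by
      rw [mem_sphere_zero_iff_norm.1 x.2, mem_sphere_zero_iff_norm.1 y.2]
    refine ⟨Submodule.reflection (Submodule.span ℝ {(x : E) - y})ᗮ, ?_⟩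
    have hA := Submodule.reflection_sub hxy
    set A := Submodule.reflection (Submodule.span ℝ {(x : E) - y})ᗮ
    have hball : ∀ z : S, (Subtype.val '' Metric.ball z r : Set E)
        = Metric.ball (z : E) r ∩ Metric.sphere 0 1 := by
      intro z
      ext a
      constructor
      · rintro ⟨b, hb, rfl⟩
        exact ⟨hb, b.2⟩
      · rintro ⟨h1, h2⟩
        exact ⟨⟨a, h2⟩, h1, rfl⟩
    rw [hball, hball, image_inter A.injective, LinearIsometryEquiv.image_ball,
      LinearIsometryEquiv.image_sphere, hA, map_zero]
  have hμ : ∀ r x y, μ (Metric.ball x r) = μ (Metric.ball y r) := by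
    intro r x y
    obtain ⟨A, hA⟩ := hrefl r x y
    have h1 := fun z : S => hiso.hausdorffMeasure_image (d := (n : ℝ))
      (Or.inl (Nat.cast_nonneg n)) (Metric.ball z r)
    have h2 := A.isometry.hausdorffMeasure_image (d := (n : ℝ))
      (Or.inl (Nat.cast_nonneg n)) (Subtype.val '' Metric.ball x r)
    rw [← hA, h1, h1] at h2
    exact h2.symm
  have hν : ∀ r x y, ν (Metric.ball x r) = ν (Metric.ball y r) := by
    intro r x y
    obtain ⟨A, hA⟩ := hrefl r x y
    have h1 := fun z : S => (volume : Measure E).toSphere_apply'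
      (s := Metric.ball z r) Metric.isOpen_ball.measurableSet
    change (volume : Measure E).toSphere _ = (volume : Measure E).toSphere _
    rw [h1, h1, hA]
    have h2 : Ioo (0 : ℝ) 1 • (A '' (Subtype.val '' Metric.ball x r))
        = A '' (Ioo (0 : ℝ) 1 • (Subtype.val '' Metric.ball x r)) := by
      ext z
      simp only [Set.mem_smul, mem_image]
      constructor
      · rintro ⟨s, hs, _, ⟨a, ha, rfl⟩, rfl⟩
        exact ⟨s • a, ⟨s, hs, a, ha, rfl⟩, by simp⟩
      · rintro ⟨_, ⟨s, hs, a, ha, rfl⟩, rfl⟩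
        exact ⟨s, hs, A a, ⟨a, ha, rfl⟩, by simp⟩
    rw [h2, A.image_eq_preimage_symm,
      A.symm.measurePreserving.measure_preimage_emb A.symm.toHomeomorph.measurableEmbedding]
  have huniq := uniform_measure_unique μ ν hμ0 hμ hν
  set c : ℝ≥0∞ := ν univ / μ univ with hc
  have hμpos : 0 < μ.real univ := by
    rw [measureReal_def, ENNReal.toReal_pos_iff]
    exact ⟨pos_iff_ne_zero.2 (by rwa [Ne, Measure.measure_univ_eq_zero]), measure_lt_top _ _⟩
  have hcfin : c ≠ ⊤ := ENNReal.div_ne_top (measure_ne_top _ _)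
    (by rwa [Ne, Measure.measure_univ_eq_zero])
  have hcreal : c.toReal = ν.real univ / μ.real univ := by
    rw [hc, ENNReal.toReal_div]; rfl
  have hνμ : ν = c.toNNReal • μ := by
    refine ext_of_forall_integral_eq_of_IsFiniteMeasure fun f => ?_
    have := huniq f
    rw [integral_smul_nnreal_measure, NNReal.smul_def, ENNReal.coe_toNNReal_eq_toReal, hcreal,
      smul_eq_mul]
    field_simp
    linarith
  refine ⟨c.toReal, ENNReal.toReal_nonneg, fun g => ?_⟩
  change ∫ σ : S, g σ ∂ν = _
  rw [hνμ, integral_smul_nnreal_measure, NNReal.smul_def, ENNReal.coe_toNNReal_eq_toReal]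
  congr 1
  rw [← hmap]
  exact ((MeasurableEmbedding.subtype_coe Metric.isClosed_sphere.measurableSet).integral_map
    (μ := μ) g).symm

end SphereHausdorff

/-! ### The radial majorant and polar coordinates -/

section Majorant

/-- The radial majorant `Λ (1 + r^ω) r^{-(N+α)}` of a weak-(*)-kernel, as a function of
`r = |x - y|`. -/
def kerMajorant (N : ℕ) (α ω Λ r : ℝ) : ℝ := Λ * (1 + r ^ ω) * r ^ (-((N : ℝ) + α))

theorem kerMajorant_nonneg {N : ℕ} {α ω Λ r : ℝ} (hΛ : 1 ≤ Λ) (hr : 0 ≤ r) :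
    0 ≤ kerMajorant N α ω Λ r := by
  unfold kerMajorant
  have := Real.rpow_nonneg hr ω
  have := Real.rpow_nonneg hr (-((N : ℝ) + α))
  have : 0 ≤ Λ := by linarith
  positivity

theorem measurable_kerMajorant {N : ℕ} {α ω Λ : ℝ} : Measurable (kerMajorant N α ω Λ) := by
  unfold kerMajorant
  fun_prop

theorem integrable_min_mul_kerMajorant {N : ℕ} (hN : 1 ≤ N) {α ω Λ β : ℝ} (hΛ : 1 ≤ Λ)
    (hω : 0 ≤ ω) (hωα : ω < α) (hβ : α < β) :
    Integrable (fun z : EuclideanSpace ℝ (Fin N) =>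
      min 1 (‖z‖ ^ β) * kerMajorant N α ω Λ ‖z‖) := by
  have : Nonempty (Fin N) := ⟨⟨0, hN⟩⟩
  rw [integrable_fun_norm_addHaar (volume : Measure (EuclideanSpace ℝ (Fin N)))
    (f := fun r => min 1 (r ^ β) * kerMajorant N α ω Λ r)]
  rw [finrank_euclideanSpace_fin]
  have hmeas : Measurable (fun y : ℝ => y ^ (N - 1) • (min 1 (y ^ β) * kerMajorant N α ω Λ y)) := by
    have := measurable_kerMajorant (N := N) (α := α) (ω := ω) (Λ := Λ)
    fun_prop
  have hpow : ∀ y : ℝ, 0 < y → y ^ (N - 1) = y ^ ((N : ℝ) - 1) := by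
    intro y hy
    rw [← Real.rpow_natCast, Nat.cast_sub hN, Nat.cast_one]
  rw [← Ioc_union_Ioi_eq_Ioi (zero_le_one' ℝ)]
  refine IntegrableOn.union ?_ ?_
  · have h1 : IntegrableOn (fun y : ℝ => 2 * Λ * y ^ (β - α - 1)) (Ioc 0 1) := by
      have := intervalIntegral.intervalIntegrable_rpow' (a := 0) (b := 1) (r := β - α - 1)
        (by linarith)
      rw [intervalIntegrable_iff_integrableOn_Ioc_of_le zero_le_one] at this
      exact this.const_mul _
    refine h1.mono' hmeas.aestronglyMeasurable ?_
    filter_upwards [ae_restrict_mem measurableSet_Ioc] with y hy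
    have hy0 := hy.1
    have hk := kerMajorant_nonneg (N := N) (α := α) (ω := ω) hΛ hy0.le
    have hyb := Real.rpow_nonneg hy0.le β
    rw [Real.norm_eq_abs, abs_of_nonneg (by rw [smul_eq_mul]; positivity), smul_eq_mul, hpow y hy0]
    have hm : min 1 (y ^ β) ≤ y ^ β := min_le_right _ _
    have hw : y ^ ω ≤ 1 := Real.rpow_le_one hy0.le hy.2 hω
    have hA := Real.rpow_nonneg hy0.le ((N : ℝ) - 1)
    have hB := Real.rpow_nonneg hy0.le (-((N : ℝ) + α))
    calc y ^ ((N : ℝ) - 1) * (min 1 (y ^ β) * kerMajorant N α ω Λ y)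
        ≤ y ^ ((N : ℝ) - 1) * (y ^ β * (Λ * (1 + 1) * y ^ (-((N : ℝ) + α)))) := by
          unfold kerMajorant at hk ⊢
          gcongr
      _ = 2 * Λ * (y ^ ((N : ℝ) - 1) * y ^ β * y ^ (-((N : ℝ) + α))) := by ring
      _ = 2 * Λ * y ^ (β - α - 1) := by
          rw [← Real.rpow_add hy0, ← Real.rpow_add hy0]; ring_nf
  · have h1 : IntegrableOn (fun y : ℝ => 2 * Λ * y ^ (ω - α - 1)) (Ioi 1) :=
      (integrableOn_Ioi_rpow_of_lt (by linarith) one_pos).const_mul _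
    refine h1.mono' hmeas.aestronglyMeasurable ?_
    filter_upwards [ae_restrict_mem measurableSet_Ioi] with y hy
    have hy1 : 1 < y := hy
    have hy0 : 0 < y := one_pos.trans hy1
    have hk := kerMajorant_nonneg (N := N) (α := α) (ω := ω) hΛ hy0.le
    have hyb := Real.rpow_nonneg hy0.le β
    rw [Real.norm_eq_abs, abs_of_nonneg (by rw [smul_eq_mul]; positivity), smul_eq_mul, hpow y hy0]
    have hm : min 1 (y ^ β) ≤ 1 := min_le_left _ _
    have hw : 1 ≤ y ^ ω := Real.one_le_rpow hy1.le hω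
    have hA := Real.rpow_nonneg hy0.le ((N : ℝ) - 1)
    have hB := Real.rpow_nonneg hy0.le (-((N : ℝ) + α))
    calc y ^ ((N : ℝ) - 1) * (min 1 (y ^ β) * kerMajorant N α ω Λ y)
        ≤ y ^ ((N : ℝ) - 1) * (1 * (Λ * (y ^ ω + y ^ ω) * y ^ (-((N : ℝ) + α)))) := by
          unfold kerMajorant at hk ⊢
          gcongr
      _ = 2 * Λ * (y ^ ((N : ℝ) - 1) * y ^ ω * y ^ (-((N : ℝ) + α))) := by ring
      _ = 2 * Λ * y ^ (ω - α - 1) := by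
          rw [← Real.rpow_add hy0, ← Real.rpow_add hy0]; ring_nf

theorem integrable_volumeIoiPow_of_norm {N : ℕ} (hN : 1 ≤ N) (f : ℝ → ℝ)
    (hf : Integrable (fun z : EuclideanSpace ℝ (Fin N) => f ‖z‖)) :
    Integrable (fun r : Ioi (0 : ℝ) => f r) (Measure.volumeIoiPow (N - 1)) := by
  have : Nonempty (Fin N) := ⟨⟨0, hN⟩⟩
  have key := (volume : Measure (EuclideanSpace ℝ (Fin N))).measurePreserving_homeomorphUnitSphereProd.integrable_comp_emb
    (g := f ∘ (↑) ∘ Prod.snd) (Homeomorph.measurableEmbedding _)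
  simp only [Function.comp_def, homeomorphUnitSphereProd_apply_snd_coe] at key
  rw [← restrict_compl_singleton (μ := volume) (0 : EuclideanSpace ℝ (Fin N)),
    ← IntegrableOn, integrableOn_iff_comap_subtypeVal (by measurability), Function.comp_def, key,
    Integrable.comp_snd_iff (β := Ioi 0) (f := (f <| Subtype.val ·)),
    finrank_euclideanSpace_fin] at hf
  · exact hf
  · simp

/-- If the spherical averages of `f` are controlled by a radial function with integrable
extension, then so is the integral of `f`. -/
theorem norm_integral_le_of_sphere_le {N : ℕ} (hN : 1 ≤ N)
    (f : EuclideanSpace ℝ (Fin N) → EuclideanSpace ℝ (Fin N)) (hf : Integrable f) (H : ℝ → ℝ)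
    (hH : Integrable (fun z : EuclideanSpace ℝ (Fin N) => H ‖z‖))
    (hfH : ∀ r, 0 < r → ‖∫ σ : Metric.sphere (0 : EuclideanSpace ℝ (Fin N)) 1, f (r • (σ : EuclideanSpace ℝ (Fin N)))
          ∂(volume : Measure (EuclideanSpace ℝ (Fin N))).toSphere‖ ≤ H r) :
    ‖∫ z, f z‖ ≤ ∫ r : Ioi (0 : ℝ), H r ∂(Measure.volumeIoiPow (N - 1)) := by
  have : Nonempty (Fin N) := ⟨⟨0, hN⟩⟩
  let E := EuclideanSpace ℝ (Fin N)
  let g : Metric.sphere (0 : E) 1 × Ioi (0 : ℝ) → E := fun p => f ((p.2 : ℝ) • (p.1 : E))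
  have hg : ∀ z : ({0}ᶜ : Set E), g (homeomorphUnitSphereProd E z) = f z := by
    intro z
    have := congrArg Subtype.val ((homeomorphUnitSphereProd E).symm_apply_apply z)
    simp only [g]
    rw [← this]
    congr 1
  have hmp := (volume : Measure E).measurePreserving_homeomorphUnitSphereProd
  rw [finrank_euclideanSpace_fin] at hmp
  have hint : Integrable g ((volume : Measure E).toSphere.prod (Measure.volumeIoiPow (N - 1))) := by
    rw [← hmp.integrable_comp_emb (Homeomorph.measurableEmbedding _)]
    simp only [Function.comp_def, hg]
    rw [← Function.comp_def f, ← integrableOn_iff_comap_subtypeVal (by measurability)]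
    exact hf.integrableOn
  have heq : ∫ z, f z = ∫ p, g p ∂((volume : Measure E).toSphere.prod (Measure.volumeIoiPow (N - 1))) := by
    rw [← hmp.integral_comp (Homeomorph.measurableEmbedding _)]
    simp only [hg]
    rw [integral_subtype_comap (measurableSet_singleton _).compl f, restrict_compl_singleton]
  rw [heq, integral_prod_symm _ hint]
  refine norm_integral_le_of_norm_le (integrable_volumeIoiPow_of_norm hN H hH)
    (Eventually.of_forall fun r => ?_)
  exact hfH r r.2

end Majorant

/-! ### The kernel at a fixed time -/

section FixedTime

/-- The properties of a weak-(*)-kernel at a fixed time used below: measurability, positivity,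
symmetry, the radial upper bound, and the bound of its truncated first moments near the diagonal,
uniform in the truncation. -/
structure GoodKernel (N : ℕ) (α ω Λ : ℝ)
    (k : EuclideanSpace ℝ (Fin N) → EuclideanSpace ℝ (Fin N) → ℝ) : Prop where
  measurable : Measurable (Function.uncurry k)
  nonneg : ∀ x y, 0 ≤ k x y
  symm : ∀ x y, k x y = k y x
  upper : ∀ x y, x ≠ y → k x y ≤ kerMajorant N α ω Λ ‖x - y‖
  moment : ∃ M s₁ : ℝ, 0 < s₁ ∧ s₁ ≤ 1 ∧ ∀ x, ∀ ε, 0 < ε →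
    ‖∫ z in {z : EuclideanSpace ℝ (Fin N) | ε ≤ ‖z‖ ∧ ‖z‖ < s₁}, k x (x + z) • z‖ ≤ M

theorem le_kerMajorant_shift {N : ℕ} {α ω Λ : ℝ}
    {k : EuclideanSpace ℝ (Fin N) → EuclideanSpace ℝ (Fin N) → ℝ}
    (hup : ∀ x y, x ≠ y → k x y ≤ kerMajorant N α ω Λ ‖x - y‖)
    (x z : EuclideanSpace ℝ (Fin N)) (hz : 0 < ‖z‖) :
    k x (x + z) ≤ kerMajorant N α ω Λ ‖z‖ := by
  have := hup x (x + z) (by simpa using norm_pos_iff.1 hz)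
  simpa using this

/-- A truncated first moment is integrable. -/
theorem integrableOn_moment {N : ℕ} (hN : 1 ≤ N) {α ω Λ : ℝ} (hΛ : 1 ≤ Λ)
    (hω : 0 ≤ ω) (hωα : ω < α) (hα : α < 2)
    {k : EuclideanSpace ℝ (Fin N) → EuclideanSpace ℝ (Fin N) → ℝ}
    (hm : Measurable (Function.uncurry k)) (hnn : ∀ x y, 0 ≤ k x y)
    (hup : ∀ x y, x ≠ y → k x y ≤ kerMajorant N α ω Λ ‖x - y‖)
    {ε s : ℝ} (hε : 0 < ε) (hs1 : s ≤ 1) (x : EuclideanSpace ℝ (Fin N)) :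
    IntegrableOn (fun z => k x (x + z) • z)
      {z : EuclideanSpace ℝ (Fin N) | ε ≤ ‖z‖ ∧ ‖z‖ < s} := by
  have hset : MeasurableSet {z : EuclideanSpace ℝ (Fin N) | ε ≤ ‖z‖ ∧ ‖z‖ < s} := by
    measurability
  have hI := integrable_min_mul_kerMajorant hN hΛ hω hωα hα
  have hmz : Measurable (fun z => k x (x + z)) :=
    hm.comp (measurable_const.prodMk (measurable_const.add measurable_id))
  refine Integrable.mono' (hI.const_mul ε⁻¹).integrableOn
    (hmz.smul measurable_id).aestronglyMeasurable ?_
  filter_upwards [ae_restrict_mem hset] with z hz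
  obtain ⟨hz1, hz2⟩ := hz
  have hz0 : 0 < ‖z‖ := hε.trans_le hz1
  have h2 : ‖z‖ ^ (2 : ℝ) = ‖z‖ * ‖z‖ := by rw [Real.rpow_two, sq]
  have hmin : min 1 (‖z‖ ^ (2 : ℝ)) = ‖z‖ * ‖z‖ := by
    rw [h2, min_eq_right]; nlinarith
  rw [norm_smul, Real.norm_of_nonneg (hnn _ _), hmin]
  have hk := le_kerMajorant_shift hup x z hz0
  have : 1 ≤ ε⁻¹ * ‖z‖ := by rw [inv_mul_eq_div, one_le_div hε]; exact hz1
  have hk0 := kerMajorant_nonneg (N := N) (α := α) (ω := ω) hΛ hz0.le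
  calc k x (x + z) * ‖z‖ ≤ kerMajorant N α ω Λ ‖z‖ * ‖z‖ * 1 := by
        rw [mul_one]; gcongr
    _ ≤ kerMajorant N α ω Λ ‖z‖ * ‖z‖ * (ε⁻¹ * ‖z‖) := by gcongr
    _ = _ := by ring

theorem goodKernel_of_weakStar {N : ℕ} (hN : 1 ≤ N) {α ω Λ ν τ : ℝ} {ζ s₀ T : ℝ≥0∞}
    (hα2 : α < 2) (hω0 : 0 ≤ ω) (hωα : ω < α) (hΛ : 1 ≤ Λ)
    (hcase : 1 ≤ α → α - 1 < ν ∧ ν < 1 ∧ 0 < s₀ ∧ 0 ≤ τ ∧ ν + ω < min (N : ℝ) α)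
    {K : ℝ → EuclideanSpace ℝ (Fin N) → EuclideanSpace ℝ (Fin N) → ℝ}
    (hK : WeakStarKernel N T K α ζ ω Λ ν s₀ τ) {t : ℝ} (ht0 : 0 ≤ t) (htT : ENNReal.ofReal t ≤ T) :
    GoodKernel N α ω Λ (K t) := by
  have hm : Measurable (Function.uncurry (K t)) :=
    hK.measurable.comp (measurable_const.prodMk measurable_id)
  have hup : ∀ x y, x ≠ y → K t x y ≤ kerMajorant N α ω Λ ‖x - y‖ := by
    intro x y hxy
    have h1 := hK.upper t x y ht0 htT hxy
    have hpos : 0 < ‖x - y‖ := norm_pos_iff.2 (sub_ne_zero.2 hxy)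
    rw [← le_div_iff₀ (Real.rpow_pos_of_pos hpos _)] at h1
    refine h1.trans_eq ?_
    rw [kerMajorant, Real.rpow_neg hpos.le, div_eq_mul_inv]
  refine ⟨hm, hK.nonneg t, fun x y => hK.symm t x y ht0 htT, hup, ?_⟩
  rcases lt_or_ge α 1 with hα1 | hα1
  · -- for `α < 1` the first moment converges absolutely
    have hI := integrable_min_mul_kerMajorant hN hΛ hω0 hωα hα1
    refine ⟨∫ z : EuclideanSpace ℝ (Fin N), min 1 (‖z‖ ^ (1 : ℝ)) * kerMajorant N α ω Λ ‖z‖, 1,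
      one_pos, le_rfl, fun x ε hε => ?_⟩
    rw [← integral_indicator (by measurability)]
    refine norm_integral_le_of_norm_le hI (Eventually.of_forall fun z => ?_)
    have hk0 := kerMajorant_nonneg (N := N) (α := α) (ω := ω) hΛ (norm_nonneg z)
    by_cases hz : z ∈ {z : EuclideanSpace ℝ (Fin N) | ε ≤ ‖z‖ ∧ ‖z‖ < 1}
    · rw [indicator_of_mem hz]
      obtain ⟨hz1, hz2⟩ := hz
      have hz0 : 0 < ‖z‖ := hε.trans_le hz1
      rw [norm_smul, Real.norm_of_nonneg (hK.nonneg _ _ _), Real.rpow_one, min_eq_right hz2.le,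
        mul_comm]
      have hk := le_kerMajorant_shift hup x z hz0
      gcongr
    · rw [indicator_of_notMem hz, norm_zero, Real.rpow_one]
      have := norm_nonneg z
      positivity
  · obtain ⟨hν1, hν2, hs₀, hτ, -⟩ := hcase hα1
    obtain ⟨c, hc0, hc⟩ := exists_toSphere_eq N hN
    obtain ⟨s₁, hs₁0, hs₁1, hs₁⟩ : ∃ s₁ : ℝ, 0 < s₁ ∧ s₁ ≤ 1 ∧ ENNReal.ofReal s₁ ≤ s₀ := by
      refine ⟨(min 1 s₀).toReal, ?_, ?_, ?_⟩
      · rw [ENNReal.toReal_pos_iff]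
        exact ⟨lt_min one_pos hs₀, (min_le_left _ _).trans_lt ENNReal.one_lt_top⟩
      · exact ENNReal.toReal_le_of_le_ofReal zero_le_one (by simp)
      · exact ENNReal.ofReal_toReal_le.trans (min_le_right _ _)
    let H : ℝ → ℝ := fun r => c * τ * (min 1 (r ^ (ν + 1)) * kerMajorant N α ω Λ r)
    have hH : Integrable (fun z : EuclideanSpace ℝ (Fin N) => H ‖z‖) :=
      (integrable_min_mul_kerMajorant hN hΛ hω0 hωα (β := ν + 1) (by linarith)).const_mul _
    refine ⟨∫ r : Ioi (0 : ℝ), H r ∂(Measure.volumeIoiPow (N - 1)), s₁, hs₁0, hs₁1,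
      fun x ε hε => ?_⟩
    have hset : MeasurableSet {z : EuclideanSpace ℝ (Fin N) | ε ≤ ‖z‖ ∧ ‖z‖ < s₁} := by
      measurability
    have hint := integrableOn_moment hN hΛ hω0 hωα hα2 hm (hK.nonneg t) hup hε hs₁1 x
    rw [← integral_indicator hset]
    refine norm_integral_le_of_sphere_le hN _ ((integrable_indicator_iff hset).2 hint) H hH
      fun r hr => ?_
    have hk0 := kerMajorant_nonneg (N := N) (α := α) (ω := ω) hΛ hr.le
    have hrν := Real.rpow_nonneg hr.le (ν + 1)
    have hH0 : 0 ≤ H r := by simp only [H]; positivity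
    have hnorm : ∀ σ : Metric.sphere (0 : EuclideanSpace ℝ (Fin N)) 1,
        ‖r • (σ : EuclideanSpace ℝ (Fin N))‖ = r := by
      intro σ
      rw [norm_smul, mem_sphere_zero_iff_norm.1 σ.2, mul_one, Real.norm_of_nonneg hr.le]
    by_cases hrs : ε ≤ r ∧ r < s₁
    · have e1 : ∀ σ : Metric.sphere (0 : EuclideanSpace ℝ (Fin N)) 1,
          {z : EuclideanSpace ℝ (Fin N) | ε ≤ ‖z‖ ∧ ‖z‖ < s₁}.indicator
            (fun z => K t x (x + z) • z) (r • (σ : EuclideanSpace ℝ (Fin N)))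
          = (fun σ : EuclideanSpace ℝ (Fin N) => K t x (x + r • σ) • (r • σ)) σ := by
        intro σ
        rw [indicator_of_mem]
        simpa [hnorm σ] using hrs
      simp_rw [e1]
      rw [hc (fun σ => K t x (x + r • σ) • (r • σ))]
      have e2 : ∫ σ in Metric.sphere (0 : EuclideanSpace ℝ (Fin N)) 1,
            K t x (x + r • σ) • (r • σ) ∂(μH[(N : ℝ) - 1])
          = (r * r ^ (-((N : ℝ) + α))) • sphereVecInt N (fun σ => kAssoc N α K t x (r • σ)) := by
        rw [sphereVecInt, ← integral_smul]
        refine setIntegral_congr_fun Metric.isClosed_sphere.measurableSet fun σ hσ => ?_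
        have := hnorm ⟨σ, hσ⟩
        simp only at this
        simp only [kAssoc, this, smul_smul]
        congr 1
        rw [Real.rpow_neg hr.le]
        have := (Real.rpow_pos_of_pos hr ((N : ℝ) + α)).ne'
        field_simp
      rw [e2, norm_smul, norm_smul, Real.norm_of_nonneg hc0]
      have hcan := hK.cancel hα1 t x r ht0 htT hr
        (((ENNReal.ofReal_lt_ofReal_iff hs₁0).2 hrs.2).trans_le hs₁)
      have hpow := Real.rpow_nonneg hr.le (-((N : ℝ) + α))
      have hr1 : r ≤ 1 := hrs.2.le.trans hs₁1
      have hmin : min 1 (r ^ (ν + 1)) = r ^ (ν + 1) :=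
        min_eq_right (Real.rpow_le_one hr.le hr1 (by linarith))
      have hle : r ^ (-((N : ℝ) + α)) ≤ kerMajorant N α ω Λ r := by
        unfold kerMajorant
        have := Real.rpow_nonneg hr.le ω
        exact le_mul_of_one_le_left hpow (by nlinarith)
      rw [Real.norm_of_nonneg (by positivity)]
      calc c * (r * r ^ (-((N : ℝ) + α)) * ‖sphereVecInt N fun σ => kAssoc N α K t x (r • σ)‖)
          ≤ c * (r * r ^ (-((N : ℝ) + α)) * (τ * r ^ ν)) := by gcongr
        _ = c * τ * ((r ^ ν * r) * r ^ (-((N : ℝ) + α))) := by ring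
        _ = c * τ * (r ^ (ν + 1) * r ^ (-((N : ℝ) + α))) := by
            rw [Real.rpow_add hr, Real.rpow_one]
        _ ≤ H r := by
            simp only [H, hmin]
            gcongr
    · have e1 : ∀ σ : Metric.sphere (0 : EuclideanSpace ℝ (Fin N)) 1,
          {z : EuclideanSpace ℝ (Fin N) | ε ≤ ‖z‖ ∧ ‖z‖ < s₁}.indicator
            (fun z => K t x (x + z) • z) (r • (σ : EuclideanSpace ℝ (Fin N))) = 0 := by
        intro σ
        rw [indicator_of_notMem]
        simpa [hnorm σ] using hrs
      simp_rw [e1]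
      simpa using hH0

end FixedTime

/-! ### Truncated operators -/

section TruncatedOperator

/-- The truncated operator `∫_{|x-y| ≥ ε} [u(x) - u(y)] k(x,y) dy`. -/
def truncOp (N : ℕ) (k : EuclideanSpace ℝ (Fin N) → EuclideanSpace ℝ (Fin N) → ℝ) (ε : ℝ)
    (u : EuclideanSpace ℝ (Fin N) → ℝ) (x : EuclideanSpace ℝ (Fin N)) : ℝ :=
  ∫ y in {y : EuclideanSpace ℝ (Fin N) | ε ≤ ‖x - y‖}, (u x - u y) * k x y

/-- First-order Taylor expansion with a remainder uniform for the base point in a ball. -/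
theorem taylor_bound {N : ℕ} {u : EuclideanSpace ℝ (Fin N) → ℝ} (hu : ContDiff ℝ 2 u) (R : ℝ) :
    ∃ M₁ M₂ : ℝ, 0 ≤ M₁ ∧ 0 ≤ M₂ ∧ ∀ x, ‖x‖ ≤ R → ‖fderiv ℝ u x‖ ≤ M₁ ∧
      ∀ z, ‖z‖ ≤ 1 → |u (x + z) - u x - fderiv ℝ u x z| ≤ M₂ * ‖z‖ ^ 2 := by
  have hd1 : ContDiff ℝ 1 (fderiv ℝ u) := hu.fderiv_right (by norm_num)
  have hc2 : Continuous (fderiv ℝ (fderiv ℝ u)) := hd1.continuous_fderiv (by norm_num)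
  have hcomp := isCompact_closedBall (0 : EuclideanSpace ℝ (Fin N)) (R + 1)
  obtain ⟨M₁, hM₁⟩ := hcomp.exists_bound_of_continuousOn hd1.continuous.continuousOn
  obtain ⟨M₂, hM₂⟩ := hcomp.exists_bound_of_continuousOn (f := fderiv ℝ (fderiv ℝ u))
    hc2.continuousOn
  refine ⟨max M₁ 0, max M₂ 0, le_max_right _ _, le_max_right _ _, fun x hx => ⟨?_, ?_⟩⟩
  · exact (hM₁ x (by rw [mem_closedBall_zero_iff]; linarith)).trans (le_max_left _ _)
  intro z hz
  have hsub : Metric.closedBall x ‖z‖ ⊆ Metric.closedBall 0 (R + 1) := by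
    refine Metric.closedBall_subset_closedBall' ?_
    rw [dist_zero_right]; linarith
  have hlip : ∀ y ∈ Metric.closedBall x ‖z‖,
      ‖fderiv ℝ u y - fderiv ℝ u x‖ ≤ max M₂ 0 * ‖z‖ := by
    intro y hy
    have h1 := (convex_closedBall x ‖z‖).norm_image_sub_le_of_norm_fderiv_le (𝕜 := ℝ)
      (f := fderiv ℝ u) (C := max M₂ 0)
      (fun p _ => (hd1.differentiable (by norm_num)) p)
      (fun p hp => (hM₂ p (hsub hp)).trans (le_max_left _ _))
      (Metric.mem_closedBall_self (norm_nonneg z)) hy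
    refine h1.trans ?_
    rw [mem_closedBall_iff_norm] at hy
    gcongr
  have h2 := (convex_closedBall x ‖z‖).norm_image_sub_le_of_norm_fderiv_le' (𝕜 := ℝ)
    (f := u) (φ := fderiv ℝ u x) (y := x + z)
    (fun p _ => (hu.differentiable (by norm_num)) p) hlip
    (Metric.mem_closedBall_self (norm_nonneg z)) (by simp)
  rw [add_sub_cancel_left] at h2
  rw [← Real.norm_eq_abs]
  refine h2.trans_eq ?_
  ring

theorem truncOp_shift {N : ℕ} (k : EuclideanSpace ℝ (Fin N) → EuclideanSpace ℝ (Fin N) → ℝ)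
    (ε : ℝ) (u : EuclideanSpace ℝ (Fin N) → ℝ) (x : EuclideanSpace ℝ (Fin N)) :
    truncOp N k ε u x
      = ∫ z in {z : EuclideanSpace ℝ (Fin N) | ε ≤ ‖z‖}, (u x - u (x + z)) * k x (x + z) := by
  rw [truncOp, ← integral_indicator (by measurability), ← integral_indicator (by measurability),
    ← integral_add_left_eq_self _ x]
  congr 1
  ext z
  simp [indicator]

/-- The truncated operators are bounded on compact sets, uniformly in the truncation: the
second-order Taylor remainder is absolutely integrable against the kernel, and the contribution of
the linear part is the truncated first moment of the kernel. -/
theorem truncOp_bound {N : ℕ} (hN : 1 ≤ N) {α ω Λ : ℝ} (hΛ : 1 ≤ Λ)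
    (hω : 0 ≤ ω) (hωα : ω < α) (hα : α < 2)
    {k : EuclideanSpace ℝ (Fin N) → EuclideanSpace ℝ (Fin N) → ℝ}
    (hk : GoodKernel N α ω Λ k) {u : EuclideanSpace ℝ (Fin N) → ℝ} (hu : ContDiff ℝ 2 u)
    {C : ℝ} (hC : ∀ x, |u x| ≤ C) (R : ℝ) :
    ∃ M : ℝ, ∀ ε, 0 < ε → ∀ x, ‖x‖ ≤ R → |truncOp N k ε u x| ≤ M := by
  obtain ⟨M, s, hs0, hs1, hM⟩ := hk.moment
  obtain ⟨M₁, M₂, hM₁0, hM₂0, hT⟩ := taylor_bound hu R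
  have hI := integrable_min_mul_kerMajorant hN hΛ hω hωα hα
  have hC0 : 0 ≤ C := (abs_nonneg _).trans (hC 0)
  set D := M₂ + 2 * C / s ^ 2 with hD
  have hD0 : 0 ≤ D := by positivity
  refine ⟨D * (∫ z : EuclideanSpace ℝ (Fin N), min 1 (‖z‖ ^ (2 : ℝ)) * kerMajorant N α ω Λ ‖z‖)
    + M₁ * M, fun ε hε x hx => ?_⟩
  obtain ⟨hx1, hx2⟩ := hT x hx
  have hset1 : MeasurableSet {z : EuclideanSpace ℝ (Fin N) | ε ≤ ‖z‖} := by measurability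
  have hset2 : MeasurableSet {z : EuclideanSpace ℝ (Fin N) | ε ≤ ‖z‖ ∧ ‖z‖ < s} := by measurability
  have hmz : Measurable (fun z => k x (x + z)) :=
    hk.measurable.comp (measurable_const.prodMk (measurable_const.add measurable_id))
  -- the linear part of the Taylor expansion near the diagonal
  let B : EuclideanSpace ℝ (Fin N) → EuclideanSpace ℝ (Fin N) :=
    {z : EuclideanSpace ℝ (Fin N) | ε ≤ ‖z‖ ∧ ‖z‖ < s}.indicator (fun z => k x (x + z) • z)
  have hBint : Integrable B := (integrable_indicator_iff hset2).2
    (integrableOn_moment hN hΛ hω hωα hα hk.measurable hk.nonneg hk.upper hε hs1 x)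
  let G : EuclideanSpace ℝ (Fin N) → ℝ :=
    {z : EuclideanSpace ℝ (Fin N) | ε ≤ ‖z‖}.indicator (fun z => (u x - u (x + z)) * k x (x + z))
  have hGm : Measurable G := by
    refine Measurable.indicator ?_ hset1
    exact (measurable_const.sub (hu.continuous.measurable.comp
      (measurable_const.add measurable_id))).mul hmz
  have hA : ∀ z, ‖G z + fderiv ℝ u x (B z)‖
      ≤ D * (min 1 (‖z‖ ^ (2 : ℝ)) * kerMajorant N α ω Λ ‖z‖) := by
    intro z
    have hk0 := kerMajorant_nonneg (N := N) (α := α) (ω := ω) hΛ (norm_nonneg z)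
    rw [Real.rpow_two]
    by_cases h1 : ε ≤ ‖z‖
    · have hz0 : 0 < ‖z‖ := hε.trans_le h1
      have hkz := le_kerMajorant_shift hk.upper x z hz0
      have hkz0 := hk.nonneg x (x + z)
      have hG : G z = (u x - u (x + z)) * k x (x + z) := indicator_of_mem (by exact h1) _
      by_cases h2 : ‖z‖ < s
      · have hBz : B z = k x (x + z) • z := indicator_of_mem (by exact ⟨h1, h2⟩) _
        have hmin : min 1 (‖z‖ ^ 2) = ‖z‖ ^ 2 := min_eq_right (by nlinarith)
        rw [hG, hBz, map_smul, smul_eq_mul, hmin]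
        have e : (u x - u (x + z)) * k x (x + z) + k x (x + z) * fderiv ℝ u x z
            = -(u (x + z) - u x - fderiv ℝ u x z) * k x (x + z) := by ring
        rw [e, norm_mul, norm_neg, Real.norm_of_nonneg hkz0, Real.norm_eq_abs]
        calc _ ≤ M₂ * ‖z‖ ^ 2 * kerMajorant N α ω Λ ‖z‖ := by
              gcongr
              exact hx2 z (h2.le.trans hs1)
          _ ≤ D * ‖z‖ ^ 2 * kerMajorant N α ω Λ ‖z‖ := by
              gcongr
              rw [hD]
              have : 0 ≤ 2 * C / s ^ 2 := by positivity
              linarith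
          _ = _ := by ring
      · have hBz : B z = 0 := indicator_of_notMem (by rintro ⟨-, h⟩; exact h2 h) _
        rw [hG, hBz, map_zero, add_zero, norm_mul, Real.norm_of_nonneg hkz0, Real.norm_eq_abs]
        push Not at h2
        have hmin : s ^ 2 ≤ min 1 (‖z‖ ^ 2) := le_min (by nlinarith) (by gcongr)
        have hdiff : |u x - u (x + z)| ≤ 2 * C := by
          have := abs_sub (u x) (u (x + z))
          linarith [hC x, hC (x + z)]
        calc _ ≤ 2 * C * kerMajorant N α ω Λ ‖z‖ := by gcongr
          _ = (2 * C / s ^ 2) * (s ^ 2 * kerMajorant N α ω Λ ‖z‖) := by field_simp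
          _ ≤ D * (min 1 (‖z‖ ^ 2) * kerMajorant N α ω Λ ‖z‖) := by
              have : 2 * C / s ^ 2 ≤ D := by rw [hD]; linarith
              gcongr
    · have hG : G z = 0 := indicator_of_notMem (by exact h1) _
      have hBz : B z = 0 := indicator_of_notMem (by rintro ⟨h, -⟩; exact h1 h) _
      rw [hG, hBz]
      simp only [map_zero, add_zero, norm_zero]
      positivity
  have hLB : Integrable (fun z => fderiv ℝ u x (B z)) :=
    (fderiv ℝ u x).integrable_comp hBint
  have hAint : Integrable (fun z => G z + fderiv ℝ u x (B z)) :=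
    Integrable.mono' (hI.const_mul D)
      (hGm.aestronglyMeasurable.add hLB.aestronglyMeasurable) (Eventually.of_forall hA)
  have e1 : truncOp N k ε u x
      = (∫ z, (G z + fderiv ℝ u x (B z))) - fderiv ℝ u x (∫ z, B z) := by
    rw [← ContinuousLinearMap.integral_comp_comm _ hBint, ← integral_sub hAint hLB, truncOp_shift,
      ← integral_indicator hset1]
    congr 1
    ext z
    simp [G]
  have e2 : ‖∫ z, B z‖ ≤ M := by
    rw [integral_indicator hset2]; exact hM x ε hε
  have e3 : ‖∫ z, (G z + fderiv ℝ u x (B z))‖ ≤ D * (∫ z : EuclideanSpace ℝ (Fin N),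
      min 1 (‖z‖ ^ (2 : ℝ)) * kerMajorant N α ω Λ ‖z‖) := by
    rw [← integral_const_mul]
    exact norm_integral_le_of_norm_le (hI.const_mul D) (Eventually.of_forall hA)
  rw [e1, ← Real.norm_eq_abs]
  refine (norm_sub_le _ _).trans (add_le_add e3 ?_)
  refine ((fderiv ℝ u x).le_opNorm _).trans ?_
  gcongr

end TruncatedOperator

/-! ### The energy inequality -/

section Energy

/-- The pointwise inequality behind the energy estimate, for the values `u, v` at `x`, `u', v'` at
`y`, and the values `a, b` of the cutoff. The terms with `δ` provide the squares
`(a + b)² (u - u')²` and `(a + b)² (v - v')²`, which absorb the commutator `(a² - b²)(u v' - u' v)`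
at the cost of `δ⁻¹ (a - b)²`. -/
theorem pointwise_energy (s δ a b u u' v v' : ℝ) (hs : s ^ 2 = 1) (hδ : 0 < δ) :
    a ^ 2 * (s * (-(v * (u - u')) + u * (v - v')) - 2 * δ * (u * (u - u') + v * (v - v')))
      + b ^ 2 * (s * (-(v' * (u' - u)) + u' * (v' - v))
        - 2 * δ * (u' * (u' - u) + v' * (v' - v)))
    ≤ (δ⁻¹ + 2 * δ) * ((a - b) ^ 2 * (u ^ 2 + v ^ 2))
      + (δ⁻¹ + 2 * δ) * ((b - a) ^ 2 * (u' ^ 2 + v' ^ 2)) := by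
  have young : ∀ x y : ℝ, x * y ≤ δ / 4 * y ^ 2 + δ⁻¹ * x ^ 2 := by
    intro x y
    have h := mul_nonneg hδ.le (sq_nonneg (y / 2 - δ⁻¹ * x))
    have e : δ * (y / 2 - δ⁻¹ * x) ^ 2 = δ / 4 * y ^ 2 + δ⁻¹ * x ^ 2 - x * y := by
      field_simp; ring
    linarith
  have h1 := young (s * (a - b) * u) ((a + b) * (v - v'))
  have h2 := young (-(s * (a - b) * v)) ((a + b) * (u - u'))
  have h1' : (s * (a - b) * u) ^ 2 = (a - b) ^ 2 * u ^ 2 := by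
    rw [mul_pow, mul_pow, hs, one_mul]
  have h2' : (-(s * (a - b) * v)) ^ 2 = (a - b) ^ 2 * v ^ 2 := by
    rw [neg_sq, mul_pow, mul_pow, hs, one_mul]
  rw [h1'] at h1
  rw [h2'] at h2
  have h3 : 0 ≤ δ * ((a + b) * (u - u') / 2 + (a - b) * (u + u')) ^ 2 := by positivity
  have h4 : 0 ≤ δ * ((a + b) * (v - v') / 2 + (a - b) * (v + v')) ^ 2 := by positivity
  have h5 : 0 ≤ δ / 2 * ((a - b) ^ 2 * ((u - u') ^ 2 + (v - v') ^ 2)) := by positivity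
  have h6 : 0 ≤ δ * ((a - b) ^ 2 * ((u - u') ^ 2 + (v - v') ^ 2)) := by positivity
  have h7 : 0 ≤ δ⁻¹ * ((a - b) ^ 2 * (u' ^ 2 + v' ^ 2)) := by positivity
  linarith

/-- The modulus `∫ min(1, |z|²/R²) Λ(1+|z|^ω)|z|^{-(N+α)} dz` controlling the commutator with a
cutoff at scale `R`. -/
def cutoffModulus (N : ℕ) (α ω Λ R : ℝ) : ℝ :=
  ∫ z : EuclideanSpace ℝ (Fin N), min 1 (‖z‖ ^ 2 / R ^ 2) * kerMajorant N α ω Λ ‖z‖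

theorem integrable_cutoffModulus {N : ℕ} (hN : 1 ≤ N) {α ω Λ : ℝ} (hΛ : 1 ≤ Λ)
    (hω : 0 ≤ ω) (hωα : ω < α) (hα : α < 2) {R : ℝ} (hR : 1 ≤ R) :
    Integrable (fun z : EuclideanSpace ℝ (Fin N) =>
      min 1 (‖z‖ ^ 2 / R ^ 2) * kerMajorant N α ω Λ ‖z‖) := by
  have hI := integrable_min_mul_kerMajorant hN hΛ hω hωα hα
  have hmm := measurable_kerMajorant (N := N) (α := α) (ω := ω) (Λ := Λ)
  refine hI.mono' (by fun_prop) (Eventually.of_forall fun z => ?_)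
  have hk0 := kerMajorant_nonneg (N := N) (α := α) (ω := ω) hΛ (norm_nonneg z)
  rw [Real.norm_of_nonneg (by positivity), Real.rpow_two]
  gcongr
  exact div_le_self (by positivity) (one_le_pow₀ hR)

theorem tendsto_cutoffModulus {N : ℕ} (hN : 1 ≤ N) {α ω Λ : ℝ} (hΛ : 1 ≤ Λ)
    (hω : 0 ≤ ω) (hωα : ω < α) (hα : α < 2) :
    Tendsto (fun n : ℕ => cutoffModulus N α ω Λ (n + 1)) atTop (nhds 0) := by
  have hI := integrable_min_mul_kerMajorant hN hΛ hω hωα hα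
  have hmm := measurable_kerMajorant (N := N) (α := α) (ω := ω) (Λ := Λ)
  have h0 : (0 : ℝ) = ∫ z : EuclideanSpace ℝ (Fin N), (0 : ℝ) := by simp
  rw [h0]
  refine tendsto_integral_of_dominated_convergence _ (fun n => by fun_prop) hI
    (fun n => Eventually.of_forall fun z => ?_) (Eventually.of_forall fun z => ?_)
  · have hk0 := kerMajorant_nonneg (N := N) (α := α) (ω := ω) hΛ (norm_nonneg z)
    rw [Real.norm_of_nonneg (by positivity), Real.rpow_two]
    gcongr
    exact div_le_self (by positivity) (one_le_pow₀ (by linarith [(Nat.cast_nonneg n : (0 : ℝ) ≤ n)]))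
  · have h1 : Tendsto (fun n : ℕ => ((n : ℝ) + 1) ^ 2) atTop atTop :=
      (tendsto_pow_atTop two_ne_zero).comp
        (tendsto_atTop_add_const_right _ _ tendsto_natCast_atTop_atTop)
    have h2 : Tendsto (fun n : ℕ => ‖z‖ ^ 2 / ((n : ℝ) + 1) ^ 2) atTop (nhds 0) :=
      h1.const_div_atTop _
    have h3 : Tendsto (fun n : ℕ => min 1 (‖z‖ ^ 2 / ((n : ℝ) + 1) ^ 2)) atTop (nhds (min 1 0)) :=
      tendsto_const_nhds.min h2
    have := h3.mul_const (kerMajorant N α ω Λ ‖z‖)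
    simpa using this

set_option maxHeartbeats 800000 in
/-- The energy estimate for the truncated operators. Symmetrizing the double integral on the left
in `x` and `y` reduces it to `pointwise_energy`; the truncation makes all double integrals
absolutely convergent. -/
theorem energy_ineq {N : ℕ} (hN : 1 ≤ N) {α ω Λ : ℝ} (hΛ : 1 ≤ Λ)
    (hω : 0 ≤ ω) (hωα : ω < α) (hα : α < 2)
    {k : EuclideanSpace ℝ (Fin N) → EuclideanSpace ℝ (Fin N) → ℝ}
    (hk : GoodKernel N α ω Λ k) {u v η : EuclideanSpace ℝ (Fin N) → ℝ}
    (hu : Continuous u) (hv : Continuous v) (hη : Continuous η)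
    {C : ℝ} (hCu : ∀ x, |u x| ≤ C) (hCv : ∀ x, |v x| ≤ C)
    (hη2 : Integrable (fun x => η x ^ 2)) (hu2 : Integrable (fun x => u x ^ 2))
    (hv2 : Integrable (fun x => v x ^ 2)) {R : ℝ} (hR : 1 ≤ R)
    (hηR : ∀ x y, (η x - η y) ^ 2 ≤ min 1 (‖x - y‖ ^ 2 / R ^ 2))
    {s δ ε : ℝ} (hs : s ^ 2 = 1) (hδ : 0 < δ) (hε : 0 < ε) :
    ∫ x, η x ^ 2 * (s * (-(v x * truncOp N k ε u x) + u x * truncOp N k ε v x)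
        - 2 * δ * (u x * truncOp N k ε u x + v x * truncOp N k ε v x))
      ≤ (δ⁻¹ + 2 * δ) * cutoffModulus N α ω Λ R * ∫ x, (u x ^ 2 + v x ^ 2) := by
  have hC0 : 0 ≤ C := (abs_nonneg _).trans (hCu 0)
  have hset : MeasurableSet {z : EuclideanSpace ℝ (Fin N) | ε ≤ ‖z‖} := by measurability
  have hmm := measurable_kerMajorant (N := N) (α := α) (ω := ω) (Λ := Λ)
  have hI := integrable_min_mul_kerMajorant hN hΛ hω hωα hα
  -- truncated kernel and its majorant
  obtain ⟨κ, κ_def⟩ : ∃ f : EuclideanSpace ℝ (Fin N) → EuclideanSpace ℝ (Fin N) → ℝ,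
    f = fun x y =>
    if ε ≤ ‖x - y‖ then k x y else 0 := ⟨_, rfl⟩
  obtain ⟨m, m_def⟩ : ∃ f : EuclideanSpace ℝ (Fin N) → ℝ,
    f = fun z =>
    if ε ≤ ‖z‖ then kerMajorant N α ω Λ ‖z‖ else 0 := ⟨_, rfl⟩
  have hκ0 : ∀ x y, 0 ≤ κ x y := by
    intro x y; simp only [κ_def]; split_ifs
    · exact hk.nonneg x y
    · exact le_rfl
  have hκm : ∀ x y, κ x y ≤ m (-x + y) := by
    intro x y
    have e : ‖-x + y‖ = ‖x - y‖ := by rw [neg_add_eq_sub, norm_sub_rev]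
    simp only [κ_def, m_def, e]; split_ifs with h
    · exact hk.upper x y (fun hxy => by rw [hxy, sub_self, norm_zero] at h; linarith)
    · exact le_rfl
  have hκs : ∀ x y, κ x y = κ y x := by
    intro x y; simp only [κ_def, norm_sub_rev x y, hk.symm x y]
  have hκmeas : Measurable (Function.uncurry κ) := by
    rw [κ_def]
    refine Measurable.ite ?_ hk.measurable measurable_const
    exact measurableSet_le measurable_const (measurable_fst.sub measurable_snd).norm
  have hmint : Integrable m := by
    refine (hI.const_mul (min 1 (ε ^ 2))⁻¹).mono' ?_ (Eventually.of_forall fun z => ?_)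
    · rw [m_def]
      exact (Measurable.ite hset (hmm.comp measurable_norm) measurable_const).aestronglyMeasurable
    · have hk0 := kerMajorant_nonneg (N := N) (α := α) (ω := ω) hΛ (norm_nonneg z)
      have hp : 0 < min 1 (ε ^ 2) := lt_min one_pos (by positivity)
      rw [Real.rpow_two]
      simp only [m_def]; split_ifs with h
      · rw [Real.norm_of_nonneg hk0, ← mul_assoc]
        refine le_mul_of_one_le_left hk0 ?_
        rw [inv_mul_eq_div, one_le_div hp]
        gcongr
      · rw [norm_zero]; positivity
  have hprod : ∀ g : EuclideanSpace ℝ (Fin N) → ℝ, Integrable g →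
      Integrable (fun p : EuclideanSpace ℝ (Fin N) × EuclideanSpace ℝ (Fin N) =>
        g p.1 * m (-p.1 + p.2)) (volume.prod volume) := by
    intro g hg
    exact (measurePreserving_prod_neg_add volume volume).integrable_comp_of_integrable
      (hg.mul_prod hmint)
  have hslice : ∀ x, Integrable (fun y => m (-x + y)) := fun x => hmint.comp_add_left (-x)
  have htr : ∀ f x, truncOp N k ε f x = ∫ y, (f x - f y) * κ x y := by
    intro f x
    rw [truncOp, ← integral_indicator (by measurability)]
    congr 1
    ext y
    simp only [indicator, κ_def, mem_ofPred_eq]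
    split_ifs <;> simp
  have hκy : ∀ x, Measurable (fun y => κ x y) := fun x =>
    hκmeas.comp (measurable_const.prodMk measurable_id)
  have hTint : ∀ f : EuclideanSpace ℝ (Fin N) → ℝ, Continuous f → (∀ x, |f x| ≤ C) →
      ∀ x, Integrable (fun y => (f x - f y) * κ x y) := by
    intro f hf hfC x
    refine ((hslice x).const_mul (2 * C)).mono'
      (((measurable_const.sub hf.measurable).mul (hκy x)).aestronglyMeasurable)
      (Eventually.of_forall fun y => ?_)
    rw [norm_mul, Real.norm_of_nonneg (hκ0 x y), Real.norm_eq_abs]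
    have h1 : |f x - f y| ≤ 2 * C := by
      have := abs_sub (f x) (f y)
      linarith [hfC x, hfC y]
    have := hκ0 x y
    gcongr
    exact hκm x y
  obtain ⟨F, F_def⟩ : ∃ f : EuclideanSpace ℝ (Fin N) → EuclideanSpace ℝ (Fin N) → ℝ,
    f = fun x y =>
    η x ^ 2 * (s * (-(v x * (u x - u y)) + u x * (v x - v y))
      - 2 * δ * (u x * (u x - u y) + v x * (v x - v y))) := ⟨_, rfl⟩
  obtain ⟨G, G_def⟩ : ∃ f : EuclideanSpace ℝ (Fin N) → EuclideanSpace ℝ (Fin N) → ℝ,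
    f = fun x y =>
    (δ⁻¹ + 2 * δ) * ((η x - η y) ^ 2 * (u x ^ 2 + v x ^ 2)) := ⟨_, rfl⟩
  have hFcont : Continuous (Function.uncurry F) := by
    simp only [F_def, Function.uncurry_def]; fun_prop
  have hGcont : Continuous (Function.uncurry G) := by
    simp only [G_def, Function.uncurry_def]; fun_prop
  have hleft : ∀ x, η x ^ 2 * (s * (-(v x * truncOp N k ε u x) + u x * truncOp N k ε v x)
        - 2 * δ * (u x * truncOp N k ε u x + v x * truncOp N k ε v x))
      = ∫ y, F x y * κ x y := by
    intro x
    have e : ∀ y, F x y * κ x y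
        = (η x ^ 2 * (-(s * v x) - 2 * δ * u x)) * ((u x - u y) * κ x y)
          + (η x ^ 2 * (s * u x - 2 * δ * v x)) * ((v x - v y) * κ x y) := by
      intro y; simp only [F_def]; ring
    simp_rw [e]
    rw [integral_add ((hTint u hu hCu x).const_mul _) ((hTint v hv hCv x).const_mul _),
      integral_const_mul, integral_const_mul, htr u x, htr v x]
    ring
  have hs1 : |s| = 1 := by
    rw [← sq_abs] at hs
    nlinarith [abs_nonneg s]
  have hFint : Integrable (fun p : EuclideanSpace ℝ (Fin N) × EuclideanSpace ℝ (Fin N) =>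
      F p.1 p.2 * κ p.1 p.2) (volume.prod volume) := by
    refine ((hprod _ hη2).const_mul (4 * C ^ 2 + 8 * δ * C ^ 2)).mono'
      ((hFcont.measurable.mul hκmeas).aestronglyMeasurable) (Eventually.of_forall fun p => ?_)
    obtain ⟨x, y⟩ := p
    simp only
    rw [norm_mul, Real.norm_of_nonneg (hκ0 x y), Real.norm_eq_abs]
    have hd : ∀ f : EuclideanSpace ℝ (Fin N) → ℝ, (∀ x, |f x| ≤ C) → |f x - f y| ≤ 2 * C := by
      intro f hf
      have := abs_sub (f x) (f y)
      linarith [hf x, hf y]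
    have hp : ∀ f g : EuclideanSpace ℝ (Fin N) → ℝ, (∀ x, |f x| ≤ C) → (∀ x, |g x| ≤ C) →
        |f x * (g x - g y)| ≤ 2 * C ^ 2 := by
      intro f g hf hg
      rw [abs_mul]
      calc |f x| * |g x - g y| ≤ C * (2 * C) := by
            gcongr
            · exact hf x
            · exact hd g hg
        _ = 2 * C ^ 2 := by ring
    have hb : |s * (-(v x * (u x - u y)) + u x * (v x - v y))
        - 2 * δ * (u x * (u x - u y) + v x * (v x - v y))| ≤ 4 * C ^ 2 + 8 * δ * C ^ 2 := by
      refine (abs_sub _ _).trans (add_le_add ?_ ?_)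
      · rw [abs_mul, hs1, one_mul]
        refine (abs_add_le _ _).trans ?_
        rw [abs_neg]
        linarith [hp v u hCv hCu, hp u v hCu hCv]
      · rw [abs_mul, abs_of_pos (by positivity : 0 < 2 * δ)]
        have := abs_add_le (u x * (u x - u y)) (v x * (v x - v y))
        have h4 : |u x * (u x - u y) + v x * (v x - v y)| ≤ 4 * C ^ 2 := by
          linarith [hp u u hCu hCu, hp v v hCv hCv]
        calc 2 * δ * |u x * (u x - u y) + v x * (v x - v y)| ≤ 2 * δ * (4 * C ^ 2) := by gcongr
          _ = 8 * δ * C ^ 2 := by ring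
    have hF : |F x y| ≤ (4 * C ^ 2 + 8 * δ * C ^ 2) * η x ^ 2 := by
      simp only [F_def]
      rw [abs_mul, abs_of_nonneg (sq_nonneg (η x)), mul_comm]
      gcongr
    have := hκ0 x y
    rw [← mul_assoc]
    gcongr
    exact hκm x y
  have huv : Integrable (fun x => u x ^ 2 + v x ^ 2) := hu2.add hv2
  have hcd : 0 < δ⁻¹ + 2 * δ := by positivity
  have hG0 : ∀ x y, 0 ≤ G x y := fun x y => by simp only [G_def]; positivity
  have hGint : Integrable (fun p : EuclideanSpace ℝ (Fin N) × EuclideanSpace ℝ (Fin N) =>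
      G p.1 p.2 * κ p.1 p.2) (volume.prod volume) := by
    refine ((hprod _ huv).const_mul (δ⁻¹ + 2 * δ)).mono'
      ((hGcont.measurable.mul hκmeas).aestronglyMeasurable) (Eventually.of_forall fun p => ?_)
    obtain ⟨x, y⟩ := p
    simp only
    rw [norm_mul, Real.norm_of_nonneg (hκ0 x y), Real.norm_of_nonneg (hG0 x y), ← mul_assoc]
    have := hκ0 x y
    have h1 : (η x - η y) ^ 2 ≤ 1 := (hηR x y).trans (min_le_left _ _)
    have hG : G x y ≤ (δ⁻¹ + 2 * δ) * (u x ^ 2 + v x ^ 2) := by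
      simp only [G_def]
      gcongr
      exact mul_le_of_le_one_left (by positivity) h1
    gcongr
    exact hκm x y
  -- antisymmetrization of the double integral
  have hsym : ∫ p : EuclideanSpace ℝ (Fin N) × EuclideanSpace ℝ (Fin N),
      (F p.1 p.2 * κ p.1 p.2 - G p.1 p.2 * κ p.1 p.2) ∂(volume.prod volume) ≤ 0 := by
    have hD := hFint.sub hGint
    have hsw := integral_prod_swap (μ := (volume : Measure (EuclideanSpace ℝ (Fin N))))
      (ν := (volume : Measure (EuclideanSpace ℝ (Fin N))))
      (fun p => F p.1 p.2 * κ p.1 p.2 - G p.1 p.2 * κ p.1 p.2)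
    have hsum := integral_add hD hD.swap
    have hle : ∫ p, ((fun p : EuclideanSpace ℝ (Fin N) × EuclideanSpace ℝ (Fin N) =>
        F p.1 p.2 * κ p.1 p.2 - G p.1 p.2 * κ p.1 p.2) p
        + (fun p : EuclideanSpace ℝ (Fin N) × EuclideanSpace ℝ (Fin N) =>
        F p.1 p.2 * κ p.1 p.2 - G p.1 p.2 * κ p.1 p.2) p.swap) ∂(volume.prod volume) ≤ 0 := by
      refine integral_nonpos fun p => ?_
      obtain ⟨x, y⟩ := p
      have h := pointwise_energy s δ (η x) (η y) (u x) (u y) (v x) (v y) hs hδ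
      have h' : F x y + F y x - (G x y + G y x) ≤ 0 := by simp only [F_def, G_def]; linarith
      simp only [Prod.swap, Pi.zero_apply]
      rw [hκs y x]
      have := mul_nonpos_of_nonpos_of_nonneg h' (hκ0 x y)
      linarith
    have hsum' : ∫ p, ((fun p : EuclideanSpace ℝ (Fin N) × EuclideanSpace ℝ (Fin N) =>
        F p.1 p.2 * κ p.1 p.2 - G p.1 p.2 * κ p.1 p.2) p
        + (fun p : EuclideanSpace ℝ (Fin N) × EuclideanSpace ℝ (Fin N) =>
        F p.1 p.2 * κ p.1 p.2 - G p.1 p.2 * κ p.1 p.2) p.swap) ∂(volume.prod volume)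
        = _ := hsum
    rw [hsum'] at hle
    simp only [Pi.sub_apply, Function.comp_apply] at hle
    linarith [hsw]
  have hGle : ∫ p : EuclideanSpace ℝ (Fin N) × EuclideanSpace ℝ (Fin N),
      G p.1 p.2 * κ p.1 p.2 ∂(volume.prod volume)
      ≤ (δ⁻¹ + 2 * δ) * cutoffModulus N α ω Λ R * ∫ x, (u x ^ 2 + v x ^ 2) := by
    rw [integral_prod _ hGint, ← integral_const_mul]
    refine integral_mono hGint.integral_prod_left (huv.const_mul _) fun x => ?_
    simp only
    have hQ := integrable_cutoffModulus hN hΛ hω hωα hα hR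
    have hQx := hQ.comp_add_left (-x)
    have e2 : cutoffModulus N α ω Λ R = ∫ y : EuclideanSpace ℝ (Fin N),
        min 1 (‖-x + y‖ ^ 2 / R ^ 2) * kerMajorant N α ω Λ ‖-x + y‖ := by
      rw [cutoffModulus, ← integral_add_left_eq_self _ (-x)]
    have e3 : (δ⁻¹ + 2 * δ) * cutoffModulus N α ω Λ R * (u x ^ 2 + v x ^ 2)
        = ∫ y : EuclideanSpace ℝ (Fin N), ((δ⁻¹ + 2 * δ) * (u x ^ 2 + v x ^ 2)) *
          (min 1 (‖-x + y‖ ^ 2 / R ^ 2) * kerMajorant N α ω Λ ‖-x + y‖) := by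
      rw [integral_const_mul, ← e2]; ring
    rw [e3]
    refine integral_mono_of_nonneg (Eventually.of_forall fun y => mul_nonneg (hG0 x y) (hκ0 x y))
      (hQx.const_mul _) (Eventually.of_forall fun y => ?_)
    have hm' : m (-x + y) ≤ kerMajorant N α ω Λ ‖-x + y‖ := by
      simp only [m_def]; split_ifs
      · exact le_rfl
      · exact kerMajorant_nonneg hΛ (norm_nonneg _)
    have hη' := hηR x y
    have e : ‖-x + y‖ = ‖x - y‖ := by rw [neg_add_eq_sub, norm_sub_rev]
    rw [← e] at hη'
    have := hκ0 x y
    simp only [G_def]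
    calc (δ⁻¹ + 2 * δ) * ((η x - η y) ^ 2 * (u x ^ 2 + v x ^ 2)) * κ x y
        = ((δ⁻¹ + 2 * δ) * (u x ^ 2 + v x ^ 2)) * ((η x - η y) ^ 2 * κ x y) := by ring
      _ ≤ _ := by
        gcongr
        exact (hκm x y).trans hm'
  have hfin : ∫ x, η x ^ 2 * (s * (-(v x * truncOp N k ε u x) + u x * truncOp N k ε v x)
        - 2 * δ * (u x * truncOp N k ε u x + v x * truncOp N k ε v x))
      = ∫ p : EuclideanSpace ℝ (Fin N) × EuclideanSpace ℝ (Fin N),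
        F p.1 p.2 * κ p.1 p.2 ∂(volume.prod volume) := by
    rw [integral_prod _ hFint]
    simp_rw [hleft]
  rw [integral_sub hFint hGint] at hsym
  rw [hfin]
  linarith

end Energy

/-! ### Evolution in time -/

section Evolution

/-- The Lipschitz cutoff `(1 - |x|/R)₊`. -/
def cutoff (N : ℕ) (R : ℝ) (x : EuclideanSpace ℝ (Fin N)) : ℝ := max 0 (1 - ‖x‖ / R)

theorem continuous_cutoff (N : ℕ) (R : ℝ) : Continuous (cutoff N R) := by
  unfold cutoff; fun_prop

theorem cutoff_nonneg {N : ℕ} (R : ℝ) (x : EuclideanSpace ℝ (Fin N)) : 0 ≤ cutoff N R x :=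
  le_max_left _ _

theorem cutoff_le_one {N : ℕ} {R : ℝ} (hR : 1 ≤ R) (x : EuclideanSpace ℝ (Fin N)) :
    cutoff N R x ≤ 1 := by
  have : 0 ≤ ‖x‖ / R := by positivity
  exact max_le zero_le_one (by linarith)

theorem cutoff_sq_le_one {N : ℕ} {R : ℝ} (hR : 1 ≤ R) (x : EuclideanSpace ℝ (Fin N)) :
    cutoff N R x ^ 2 ≤ 1 :=
  pow_le_one₀ (cutoff_nonneg R x) (cutoff_le_one hR x)

theorem cutoff_eq_zero {N : ℕ} {R : ℝ} (hR : 1 ≤ R) {x : EuclideanSpace ℝ (Fin N)}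
    (hx : R < ‖x‖) : cutoff N R x = 0 := by
  have : 1 ≤ ‖x‖ / R := by rw [one_le_div (by linarith)]; exact hx.le
  exact max_eq_left (by linarith)

theorem cutoff_sub_sq_le {N : ℕ} {R : ℝ} (hR : 1 ≤ R) (x y : EuclideanSpace ℝ (Fin N)) :
    (cutoff N R x - cutoff N R y) ^ 2 ≤ min 1 (‖x - y‖ ^ 2 / R ^ 2) := by
  have hR0 : 0 < R := by linarith
  refine le_min ?_ ?_
  · have h1 := cutoff_nonneg R x
    have h2 := cutoff_nonneg R y
    have h3 := cutoff_le_one hR x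
    have h4 := cutoff_le_one hR y
    nlinarith
  · rw [← div_pow, ← sq_abs]
    have h : |cutoff N R x - cutoff N R y| ≤ ‖x - y‖ / R := by
      refine (abs_max_sub_max_le_max _ _ _ _).trans ?_
      have e : (1 - ‖x‖ / R) - (1 - ‖y‖ / R) = -((‖x‖ - ‖y‖) / R) := by ring
      rw [e, sub_self, abs_zero, abs_neg, abs_div, abs_of_pos hR0]
      refine max_le (by positivity) ?_
      gcongr
      exact abs_norm_sub_norm_le x y
    gcongr

theorem tendsto_cutoff {N : ℕ} (x : EuclideanSpace ℝ (Fin N)) :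
    Tendsto (fun n : ℕ => cutoff N (n + 1) x) atTop (nhds 1) := by
  have h1 : Tendsto (fun n : ℕ => (n : ℝ) + 1) atTop atTop :=
    tendsto_atTop_add_const_right _ _ tendsto_natCast_atTop_atTop
  have h2 : Tendsto (fun n : ℕ => 1 - ‖x‖ / ((n : ℝ) + 1)) atTop (nhds (1 - 0)) :=
    tendsto_const_nhds.sub (h1.const_div_atTop _)
  have h3 := (tendsto_const_nhds (x := (0 : ℝ))).max h2
  simpa [cutoff] using h3

theorem integrable_indicator_closedBall (N : ℕ) (R M : ℝ) :
    Integrable ((Metric.closedBall (0 : EuclideanSpace ℝ (Fin N)) R).indicator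
      fun _ => M) :=
  (integrable_indicator_iff Metric.isClosed_closedBall.measurableSet).2
    (integrableOn_const (measure_closedBall_lt_top).ne)

theorem integrable_cutoff_sq {N : ℕ} {R : ℝ} (hR : 1 ≤ R) :
    Integrable (fun x => cutoff N R x ^ 2) := by
  refine (integrable_indicator_closedBall N R 1).mono'
    ((continuous_cutoff N R).pow 2).aestronglyMeasurable (Eventually.of_forall fun x => ?_)
  rw [Real.norm_of_nonneg (sq_nonneg _)]
  by_cases hx : ‖x‖ ≤ R
  · rw [indicator_of_mem (by simpa using hx)]
    exact cutoff_sq_le_one hR x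
  · rw [cutoff_eq_zero hR (not_le.1 hx), indicator_of_notMem (by simpa using hx)]
    simp

theorem measurable_truncOp {N : ℕ}
    {k : EuclideanSpace ℝ (Fin N) → EuclideanSpace ℝ (Fin N) → ℝ}
    (hk : Measurable (Function.uncurry k)) {u : EuclideanSpace ℝ (Fin N) → ℝ}
    (hu : Continuous u) (ε : ℝ) : Measurable (truncOp N k ε u) := by
  have h : Measurable (fun p : EuclideanSpace ℝ (Fin N) × EuclideanSpace ℝ (Fin N) =>
      if ε ≤ ‖p.1 - p.2‖ then (u p.1 - u p.2) * k p.1 p.2 else 0) := by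
    refine Measurable.ite ?_ (Measurable.mul (by fun_prop) hk) measurable_const
    exact measurableSet_le measurable_const (measurable_fst.sub measurable_snd).norm
  have h2 := h.stronglyMeasurable.integral_prod_right' (ν := volume)
  have e : truncOp N k ε u = fun x => ∫ y,
      if ε ≤ ‖x - y‖ then (u x - u y) * k x y else 0 := by
    ext x
    rw [truncOp, ← integral_indicator (by measurability)]
    congr 1
  rw [e]
  exact h2.measurable

/-- The energy inequality for the principal value operators themselves. -/
theorem energy_ineq_limit {N : ℕ} (hN : 1 ≤ N) {α ω Λ : ℝ} (hΛ : 1 ≤ Λ)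
    (hω : 0 ≤ ω) (hωα : ω < α) (hα : α < 2)
    {k : EuclideanSpace ℝ (Fin N) → EuclideanSpace ℝ (Fin N) → ℝ}
    (hk : GoodKernel N α ω Λ k) {u v Lu Lv : EuclideanSpace ℝ (Fin N) → ℝ}
    (hu : ContDiff ℝ 2 u) (hv : ContDiff ℝ 2 v)
    {C : ℝ} (hCu : ∀ x, |u x| ≤ C) (hCv : ∀ x, |v x| ≤ C)
    (hu2 : Integrable (fun x => u x ^ 2)) (hv2 : Integrable (fun x => v x ^ 2))
    (hLu : ∀ x, Tendsto (fun ε => truncOp N k ε u x) (nhdsWithin 0 (Ioi 0)) (nhds (Lu x)))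
    (hLv : ∀ x, Tendsto (fun ε => truncOp N k ε v x) (nhdsWithin 0 (Ioi 0)) (nhds (Lv x)))
    {R : ℝ} (hR : 1 ≤ R) {s δ : ℝ} (hs : s ^ 2 = 1) (hδ : 0 < δ) :
    ∫ x, cutoff N R x ^ 2 * (s * (-(v x * Lu x) + u x * Lv x)
        - 2 * δ * (u x * Lu x + v x * Lv x))
      ≤ (δ⁻¹ + 2 * δ) * cutoffModulus N α ω Λ R * ∫ x, (u x ^ 2 + v x ^ 2) := by
  obtain ⟨Mu, hMu⟩ := truncOp_bound hN hΛ hω hωα hα hk hu hCu R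
  obtain ⟨Mv, hMv⟩ := truncOp_bound hN hΛ hω hωα hα hk hv hCv R
  have hC0 : 0 ≤ C := (abs_nonneg _).trans (hCu 0)
  have hs1 : |s| = 1 := by
    rw [← sq_abs] at hs
    nlinarith [abs_nonneg s]
  have hmeas : ∀ ε, Measurable fun x => cutoff N R x ^ 2 *
      (s * (-(v x * truncOp N k ε u x) + u x * truncOp N k ε v x)
        - 2 * δ * (u x * truncOp N k ε u x + v x * truncOp N k ε v x)) := by
    intro ε
    have h1 := measurable_truncOp hk.measurable hu.continuous ε
    have h2 := measurable_truncOp hk.measurable hv.continuous ε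
    have h3 := (continuous_cutoff N R).measurable
    have h4 := hu.continuous.measurable
    have h5 := hv.continuous.measurable
    fun_prop
  have hlim := tendsto_integral_filter_of_dominated_convergence
    (μ := (volume : Measure (EuclideanSpace ℝ (Fin N))))
    (l := nhdsWithin (0 : ℝ) (Ioi 0))
    (F := fun ε x => cutoff N R x ^ 2 *
      (s * (-(v x * truncOp N k ε u x) + u x * truncOp N k ε v x)
        - 2 * δ * (u x * truncOp N k ε u x + v x * truncOp N k ε v x)))
    (f := fun x => cutoff N R x ^ 2 * (s * (-(v x * Lu x) + u x * Lv x)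
        - 2 * δ * (u x * Lu x + v x * Lv x)))
    ((Metric.closedBall (0 : EuclideanSpace ℝ (Fin N)) R).indicator
      fun _ => (C * Mu + C * Mv) + 2 * δ * (C * Mu + C * Mv))
    (Eventually.of_forall fun ε => (hmeas ε).aestronglyMeasurable)
    (by
      filter_upwards [self_mem_nhdsWithin] with ε hε
      refine Eventually.of_forall fun x => ?_
      by_cases hx : ‖x‖ ≤ R
      · rw [indicator_of_mem (by simpa using hx), Real.norm_eq_abs, abs_mul,
          abs_of_nonneg (sq_nonneg _)]
        have ha := hMu ε hε x hx
        have hb := hMv ε hε x hx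
        have hp : ∀ a b M : ℝ, |a| ≤ C → |b| ≤ M → |a * b| ≤ C * M := fun a b M h1 h2 => by
          rw [abs_mul]; gcongr
        refine (mul_le_of_le_one_left (abs_nonneg _) (cutoff_sq_le_one hR x)).trans ?_
        refine (abs_sub _ _).trans (add_le_add ?_ ?_)
        · rw [abs_mul, hs1, one_mul]
          refine (abs_add_le _ _).trans ?_
          rw [abs_neg]
          exact add_le_add (hp _ _ _ (hCv x) ha) (hp _ _ _ (hCu x) hb)
        · rw [abs_mul, abs_of_pos (by positivity : 0 < 2 * δ)]
          gcongr
          exact (abs_add_le _ _).trans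
            (add_le_add (hp _ _ _ (hCu x) ha) (hp _ _ _ (hCv x) hb))
      · rw [cutoff_eq_zero hR (not_le.1 hx), indicator_of_notMem (by simpa using hx)]
        simp)
    (integrable_indicator_closedBall N R _)
    (Eventually.of_forall fun x => by
      have h1 := hLu x
      have h2 := hLv x
      exact tendsto_const_nhds.mul (((((h1.const_mul _).neg).add (h2.const_mul _)).const_mul _).sub
        (((h1.const_mul _).add (h2.const_mul _)).const_mul _)))
  refine le_of_tendsto hlim ?_
  filter_upwards [self_mem_nhdsWithin] with ε hε
  exact energy_ineq hN hΛ hω hωα hα hk hu.continuous hv.continuous (continuous_cutoff N R) hCu hCv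
    (integrable_cutoff_sq hR) hu2 hv2 hR (cutoff_sub_sq_le hR) hs hδ hε

/-- A differential inequality for a localized integral, integrated in time. -/
theorem integral_sub_le_of_deriv_le {N : ℕ} {T : ℝ} (hT : 0 < T)
    {f f' : ℝ → EuclideanSpace ℝ (Fin N) → ℝ} {χ : EuclideanSpace ℝ (Fin N) → ℝ}
    (hχ : Continuous χ) {R : ℝ} (hχ0 : ∀ x, R < ‖x‖ → χ x = 0) (hχ1 : ∀ x, |χ x| ≤ 1)
    (hf : ContinuousOn (Function.uncurry f) (Icc 0 T ×ˢ univ))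
    (hf' : ContinuousOn (Function.uncurry f') (Icc 0 T ×ˢ univ))
    (hderiv : ∀ t ∈ Icc 0 T, ∀ x, HasDerivWithinAt (fun t => f t x) (f' t x) (Icc 0 T) t)
    {B : ℝ} (hB : ∀ t ∈ Icc 0 T, ∫ x, χ x * f' t x ≤ B) :
    (∫ x, χ x * f T x) - ∫ x, χ x * f 0 x ≤ B * T := by
  have hcpt : IsCompact (Icc 0 T ×ˢ Metric.closedBall (0 : EuclideanSpace ℝ (Fin N)) R) :=
    isCompact_Icc.prod (isCompact_closedBall _ _)
  have hsub : Icc 0 T ×ˢ Metric.closedBall (0 : EuclideanSpace ℝ (Fin N)) R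
      ⊆ Icc 0 T ×ˢ univ := prod_mono le_rfl (subset_univ _)
  obtain ⟨M, hM⟩ := hcpt.exists_bound_of_continuousOn (hf.mono hsub)
  obtain ⟨M', hM'⟩ := hcpt.exists_bound_of_continuousOn (hf'.mono hsub)
  have hslice : ∀ g : ℝ → EuclideanSpace ℝ (Fin N) → ℝ,
      ContinuousOn (Function.uncurry g) (Icc 0 T ×ˢ univ) → ∀ t ∈ Icc 0 T, Continuous (g t) := by
    intro g hg t ht
    exact hg.comp_continuous (f := fun x => (t, x)) (by fun_prop) (fun x => ⟨ht, mem_univ x⟩)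
  have hbd : ∀ (g : ℝ → EuclideanSpace ℝ (Fin N) → ℝ) (D : ℝ),
      (∀ p ∈ Icc 0 T ×ˢ Metric.closedBall (0 : EuclideanSpace ℝ (Fin N)) R,
        ‖Function.uncurry g p‖ ≤ D) → ∀ t ∈ Icc 0 T, ∀ x, ‖χ x * g t x‖ ≤
        (Metric.closedBall (0 : EuclideanSpace ℝ (Fin N)) R).indicator (fun _ => D) x := by
    intro g D hD t ht x
    by_cases hx : ‖x‖ ≤ R
    · rw [indicator_of_mem (by simpa using hx), norm_mul]
      exact (mul_le_of_le_one_left (norm_nonneg _) (hχ1 x)).trans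
        (hD (t, x) ⟨ht, by simpa using hx⟩)
    · rw [hχ0 x (not_le.1 hx), indicator_of_notMem (by simpa using hx)]
      simp
  have hcont : ContinuousOn (fun t => ∫ x, χ x * f t x) (Icc 0 T) := by
    refine continuousOn_of_dominated (F := fun t x => χ x * f t x)
      (bound := (Metric.closedBall (0 : EuclideanSpace ℝ (Fin N)) R).indicator fun _ => M)
      (fun t ht => (hχ.mul (hslice f hf t ht)).aestronglyMeasurable)
      (fun t ht => Eventually.of_forall (hbd f M hM t ht))
      (integrable_indicator_closedBall N R M) (Eventually.of_forall fun x => ?_)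
    exact continuousOn_const.mul fun t ht => (hderiv t ht x).continuousWithinAt
  have hd : ∀ t ∈ Ioo 0 T, HasDerivAt (fun t => ∫ x, χ x * f t x) (∫ x, χ x * f' t x) t := by
    intro t ht
    have htI := Ioo_subset_Icc_self ht
    have hnh : Ioo 0 T ∈ nhds t := isOpen_Ioo.mem_nhds ht
    refine (hasDerivAt_integral_of_dominated_loc_of_deriv_le (F := fun t x => χ x * f t x)
      (F' := fun t x => χ x * f' t x)
      (bound := (Metric.closedBall (0 : EuclideanSpace ℝ (Fin N)) R).indicator fun _ => M')
      hnh ?_ ?_ ?_ ?_ (integrable_indicator_closedBall N R M') ?_).2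
    · filter_upwards [hnh] with t' ht'
      exact (hχ.mul (hslice f hf t' (Ioo_subset_Icc_self ht'))).aestronglyMeasurable
    · exact (integrable_indicator_closedBall N R M).mono'
        (hχ.mul (hslice f hf t htI)).aestronglyMeasurable
        (Eventually.of_forall (hbd f M hM t htI))
    · exact (hχ.mul (hslice f' hf' t htI)).aestronglyMeasurable
    · exact Eventually.of_forall fun x t' ht' => hbd f' M' hM' t' (Ioo_subset_Icc_self ht') x
    · exact Eventually.of_forall fun x t' ht' =>
        ((hderiv t' (Ioo_subset_Icc_self ht') x).hasDerivAt (Icc_mem_nhds ht'.1 ht'.2)).const_mul _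
  have := (convex_Icc 0 T).image_sub_le_mul_sub_of_deriv_le hcont
    (fun t ht => (hd t (by simpa using ht)).differentiableAt.differentiableWithinAt)
    (C := B) (fun t ht => by
      rw [interior_Icc] at ht
      rw [(hd t ht).deriv]
      exact hB t (Ioo_subset_Icc_self ht)) 0 (left_mem_Icc.2 hT.le) T (right_mem_Icc.2 hT.le) hT.le
  simpa using this

/-- A function smooth on `[0,T] × ℝ^N` has a time derivative continuous up to the boundary. -/
theorem exists_time_deriv {N : ℕ} {T : ℝ} (hT : 0 < T)
    {w : ℝ → EuclideanSpace ℝ (Fin N) → ℝ}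
    (hw : ContDiffOn ℝ (⊤ : ℕ∞) (Function.uncurry w) (Icc 0 T ×ˢ univ)) :
    ∃ w' : ℝ → EuclideanSpace ℝ (Fin N) → ℝ,
      ContinuousOn (Function.uncurry w') (Icc 0 T ×ˢ univ) ∧
      ∀ t ∈ Icc 0 T, ∀ x, HasDerivWithinAt (fun t => w t x) (w' t x) (Icc 0 T) t := by
  have huniq : UniqueDiffOn ℝ (Icc 0 T ×ˢ (univ : Set (EuclideanSpace ℝ (Fin N)))) :=
    (uniqueDiffOn_Icc hT).prod uniqueDiffOn_univ
  refine ⟨fun t x => fderivWithin ℝ (Function.uncurry w) (Icc 0 T ×ˢ univ) (t, x) (1, 0),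
    (hw.continuousOn_fderivWithin huniq (by simp)).clm_apply continuousOn_const, ?_⟩
  intro t ht x
  have h1 := (hw.differentiableOn (by simp) (t, x) ⟨ht, mem_univ x⟩).hasFDerivWithinAt
  have h2 : HasDerivWithinAt (fun t : ℝ => (t, x)) (1, 0) (Icc 0 T) t :=
    ((hasDerivAt_id t).prodMk (hasDerivAt_const t x)).hasDerivWithinAt
  exact h1.comp_hasDerivWithinAt t h2 (fun t' ht' => mk_mem_prod ht' (mem_univ x))

theorem contDiff_slice {N : ℕ} {T : ℝ} {w : ℝ → EuclideanSpace ℝ (Fin N) → ℝ}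
    (hw : ContDiffOn ℝ (⊤ : ℕ∞) (Function.uncurry w) (Icc 0 T ×ˢ univ)) {t : ℝ}
    (ht : t ∈ Icc 0 T) : ContDiff ℝ 2 (w t) := by
  rw [← contDiffOn_univ]
  exact (hw.of_le (WithTop.coe_le_coe.2 (le_top : (2 : ℕ∞) ≤ ⊤))).comp (f := fun x => (t, x))
    (by fun_prop) fun x _ => ⟨ht, mem_univ x⟩

theorem integrable_of_lintegral_le {N : ℕ} {u : EuclideanSpace ℝ (Fin N) → ℝ} {C : ℝ}
    (hu : Continuous u) (hC : ∫⁻ x, ENNReal.ofReal |u x| ≤ ENNReal.ofReal C) :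
    Integrable u := by
  refine ⟨hu.aestronglyMeasurable, ?_⟩
  rw [hasFiniteIntegral_iff_norm]
  exact hC.trans_lt ENNReal.ofReal_lt_top

theorem integrable_mul_of_bounded {N : ℕ} {u v : EuclideanSpace ℝ (Fin N) → ℝ} {C : ℝ}
    (hu : Integrable u) (hv : Continuous v) (hC : ∀ x, |v x| ≤ C) :
    Integrable (fun x => u x * v x) := by
  refine (hu.norm.mul_const C).mono' (hu.1.mul hv.aestronglyMeasurable)
    (Eventually.of_forall fun x => ?_)
  rw [norm_mul]
  gcongr
  exact hC x

theorem integral_sq_le {N : ℕ} {u : EuclideanSpace ℝ (Fin N) → ℝ} {C : ℝ}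
    (hu : Continuous u) (hC : ∫⁻ x, ENNReal.ofReal |u x| ≤ ENNReal.ofReal C)
    (hb : ∀ x, |u x| ≤ C) :
    Integrable (fun x => u x ^ 2) ∧ ∫ x, u x ^ 2 ≤ C ^ 2 := by
  have hC0 : 0 ≤ C := (abs_nonneg _).trans (hb 0)
  have hI := integrable_of_lintegral_le hu hC
  have hsq : Integrable (fun x => u x ^ 2) := by
    simpa only [sq] using integrable_mul_of_bounded hI hu hb
  refine ⟨hsq, ?_⟩
  have h1 : ∫ x, |u x| ≤ C := by
    rw [integral_eq_lintegral_of_nonneg_ae (Eventually.of_forall fun x => abs_nonneg _)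
      hu.abs.aestronglyMeasurable]
    exact ENNReal.toReal_le_of_le_ofReal hC0 hC
  calc ∫ x, u x ^ 2 ≤ ∫ x, C * |u x| := by
        refine integral_mono hsq (hI.abs.const_mul C) fun x => ?_
        simp only
        rw [← sq_abs, sq]
        exact mul_le_mul_of_nonneg_right (hb x) (abs_nonneg _)
    _ = C * ∫ x, |u x| := integral_const_mul _ _
    _ ≤ C * C := by gcongr
    _ = C ^ 2 := by ring

/-- The dual pairing of a solution `w` of the forward equation and a solution `ψ` of the
time-reversed equation is conserved. -/
theorem pairing_conserved {N : ℕ} (hN : 1 ≤ N) {α ω Λ : ℝ} (hΛ : 1 ≤ Λ)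
    (hω : 0 ≤ ω) (hωα : ω < α) (hα : α < 2) {T : ℝ} (hT : 0 < T)
    {K : ℝ → EuclideanSpace ℝ (Fin N) → EuclideanSpace ℝ (Fin N) → ℝ}
    (hK : ∀ t ∈ Icc 0 T, GoodKernel N α ω Λ (K t))
    {w ψ : ℝ → EuclideanSpace ℝ (Fin N) → ℝ}
    (hw : ContDiffOn ℝ (⊤ : ℕ∞) (Function.uncurry w) (Icc 0 T ×ˢ univ))
    (hψ : ContDiffOn ℝ (⊤ : ℕ∞) (Function.uncurry ψ) (Icc 0 T ×ˢ univ))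
    {C : ℝ}
    (hwC : ∀ t ∈ Icc 0 T,
      (∫⁻ x, ENNReal.ofReal |w t x| ≤ ENNReal.ofReal C) ∧ ∀ x, |w t x| ≤ C)
    (hψC : ∀ t ∈ Icc 0 T,
      (∫⁻ x, ENNReal.ofReal |ψ t x| ≤ ENNReal.ofReal C) ∧ ∀ x, |ψ t x| ≤ C)
    (hwsol : ∀ t ∈ Icc 0 T, ∀ x, ∃ L : ℝ,
      Tendsto (fun ε => truncOp N (K t) ε (w t) x) (nhdsWithin 0 (Ioi 0)) (nhds L) ∧
        HasDerivWithinAt (fun t => w t x) (-L) (Icc 0 T) t)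
    (hψsol : ∀ t ∈ Icc 0 T, ∀ x, ∃ L : ℝ,
      Tendsto (fun ε => truncOp N (K t) ε (ψ t) x) (nhdsWithin 0 (Ioi 0)) (nhds L) ∧
        HasDerivWithinAt (fun t => ψ t x) L (Icc 0 T) t) :
    ∫ x, w 0 x * ψ 0 x = ∫ x, w T x * ψ T x := by
  obtain ⟨w', hw'c, hw'⟩ := exists_time_deriv hT hw
  obtain ⟨ψ', hψ'c, hψ'⟩ := exists_time_deriv hT hψ
  have hwL : ∀ t ∈ Icc 0 T, ∀ x,
      Tendsto (fun ε => truncOp N (K t) ε (w t) x) (nhdsWithin 0 (Ioi 0)) (nhds (-w' t x)) := by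
    intro t ht x
    obtain ⟨L, h1, h2⟩ := hwsol t ht x
    rwa [(uniqueDiffOn_Icc hT t ht).eq_deriv _ (hw' t ht x) h2, neg_neg]
  have hψL : ∀ t ∈ Icc 0 T, ∀ x,
      Tendsto (fun ε => truncOp N (K t) ε (ψ t) x) (nhdsWithin 0 (Ioi 0)) (nhds (ψ' t x)) := by
    intro t ht x
    obtain ⟨L, h1, h2⟩ := hψsol t ht x
    rwa [(uniqueDiffOn_Icc hT t ht).eq_deriv _ (hψ' t ht x) h2]
  have h0 : (0 : ℝ) ∈ Icc 0 T := left_mem_Icc.2 hT.le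
  have h1 : T ∈ Icc 0 T := right_mem_Icc.2 hT.le
  have hwcont : ∀ t ∈ Icc 0 T, Continuous (w t) := fun t ht => (contDiff_slice hw ht).continuous
  have hψcont : ∀ t ∈ Icc 0 T, Continuous (ψ t) := fun t ht => (contDiff_slice hψ ht).continuous
  have hw2 := fun t ht => integral_sq_le (hwcont t ht) (hwC t ht).1 (hwC t ht).2
  have hψ2 := fun t ht => integral_sq_le (hψcont t ht) (hψC t ht).1 (hψC t ht).2
  have hwψ : ∀ t ∈ Icc 0 T, Integrable (fun x => w t x * ψ t x) := fun t ht =>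
    integrable_mul_of_bounded (integrable_of_lintegral_le (hwcont t ht) (hwC t ht).1)
      (hψcont t ht) (hψC t ht).2
  -- multiplication by a squared cutoff preserves integrability
  have hcut : ∀ {R : ℝ}, 1 ≤ R → ∀ g : EuclideanSpace ℝ (Fin N) → ℝ, Integrable g →
      Integrable (fun x => cutoff N R x ^ 2 * g x) := by
    intro R hR g hg
    refine hg.norm.mono' (((continuous_cutoff N R).pow 2).aestronglyMeasurable.mul hg.1)
      (Eventually.of_forall fun x => ?_)
    rw [norm_mul, Real.norm_of_nonneg (sq_nonneg _)]
    exact mul_le_of_le_one_left (norm_nonneg _) (cutoff_sq_le_one hR x)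
  have hcutle : ∀ {R : ℝ}, 1 ≤ R → ∀ g : EuclideanSpace ℝ (Fin N) → ℝ,
      Integrable (fun x => g x ^ 2) → ∫ x, g x ^ 2 ≤ C ^ 2 →
      0 ≤ ∫ x, cutoff N R x ^ 2 * g x ^ 2 ∧ ∫ x, cutoff N R x ^ 2 * g x ^ 2 ≤ C ^ 2 := by
    intro R hR g hg hgC
    refine ⟨integral_nonneg fun x => by positivity, le_trans ?_ hgC⟩
    exact integral_mono (hcut hR _ hg) hg fun x =>
      mul_le_of_le_one_left (sq_nonneg _) (cutoff_sq_le_one hR x)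
  have hQ0 : ∀ R, 0 ≤ cutoffModulus N α ω Λ R := fun R => integral_nonneg fun z => by
    have := kerMajorant_nonneg (N := N) (α := α) (ω := ω) hΛ (norm_nonneg z)
    positivity
  -- the estimate at a fixed cutoff scale
  have hmain : ∀ s : ℝ, s ^ 2 = 1 → ∀ δ : ℝ, 0 < δ → ∀ R : ℝ, 1 ≤ R →
      s * ((∫ x, cutoff N R x ^ 2 * (w T x * ψ T x))
        - ∫ x, cutoff N R x ^ 2 * (w 0 x * ψ 0 x))
      ≤ 2 * δ * C ^ 2 + (δ⁻¹ + 2 * δ) * cutoffModulus N α ω Λ R * (2 * C ^ 2) * T := by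
    intro s hs δ hδ R hR
    -- `f` is the density of `∫ η² (s w ψ + δ w² - δ ψ²)`; since `∂ₜ w = -L w` and `∂ₜ ψ = L ψ`, the
    -- last two terms contribute the dissipation `-2δ(w L w + ψ L ψ)` to its time derivative
    have hJ := integral_sub_le_of_deriv_le hT
      (f := fun t x => s * (w t x * ψ t x) + δ * w t x ^ 2 - δ * ψ t x ^ 2)
      (f' := fun t x => s * (-(ψ t x * -w' t x) + w t x * ψ' t x)
        - 2 * δ * (w t x * -w' t x + ψ t x * ψ' t x))
      (χ := fun x => cutoff N R x ^ 2) ((continuous_cutoff N R).pow 2) (R := R)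
      (fun x hx => by simp [cutoff_eq_zero hR hx])
      (fun x => by rw [abs_of_nonneg (sq_nonneg _)]; exact cutoff_sq_le_one hR x)
      (by
        have a := hw.continuousOn
        have b := hψ.continuousOn
        exact ((continuousOn_const.mul (a.mul b)).add (continuousOn_const.mul (a.pow 2))).sub
          (continuousOn_const.mul (b.pow 2)))
      (by
        have a := hw.continuousOn
        have b := hψ.continuousOn
        exact (continuousOn_const.mul (((b.mul hw'c.neg).neg).add (a.mul hψ'c))).sub
          (continuousOn_const.mul ((a.mul hw'c.neg).add (b.mul hψ'c))))
      (fun t ht x => by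
        have a := hw' t ht x
        have b := hψ' t ht x
        refine ((((a.mul b).const_mul s).add ((a.pow 2).const_mul δ)).sub
          ((b.pow 2).const_mul δ)).congr_deriv ?_
        simp only [Nat.cast_ofNat, Nat.add_one_sub_one, pow_one]
        ring)
      (B := (δ⁻¹ + 2 * δ) * cutoffModulus N α ω Λ R * (2 * C ^ 2))
      (fun t ht => by
        refine (energy_ineq_limit hN hΛ hω hωα hα (hK t ht) (contDiff_slice hw ht)
          (contDiff_slice hψ ht) (hwC t ht).2 (hψC t ht).2 (hw2 t ht).1 (hψ2 t ht).1
          (hwL t ht) (hψL t ht) hR hs hδ).trans ?_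
        have := hQ0 R
        rw [integral_add (hw2 t ht).1 (hψ2 t ht).1]
        gcongr
        linarith [(hw2 t ht).2, (hψ2 t ht).2])
    have hsplit : ∀ t ∈ Icc 0 T,
        ∫ x, cutoff N R x ^ 2 * (s * (w t x * ψ t x) + δ * w t x ^ 2 - δ * ψ t x ^ 2)
        = s * (∫ x, cutoff N R x ^ 2 * (w t x * ψ t x))
          + δ * (∫ x, cutoff N R x ^ 2 * w t x ^ 2)
          - δ * (∫ x, cutoff N R x ^ 2 * ψ t x ^ 2) := by
      intro t ht
      have i1 := (hcut hR _ (hwψ t ht)).const_mul s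
      have i2 := (hcut hR _ (hw2 t ht).1).const_mul δ
      have i3 := (hcut hR _ (hψ2 t ht).1).const_mul δ
      rw [← integral_const_mul, ← integral_const_mul, ← integral_const_mul,
        ← integral_add i1 i2, ← integral_sub (by exact i1.add i2) i3]
      congr 1
      ext x
      ring
    rw [hsplit T h1, hsplit 0 h0] at hJ
    have b1 := (hcutle hR _ (hw2 T h1).1 (hw2 T h1).2).1
    have b2 := (hcutle hR _ (hψ2 T h1).1 (hψ2 T h1).2).2
    have b3 := (hcutle hR _ (hw2 0 h0).1 (hw2 0 h0).2).2
    have b4 := (hcutle hR _ (hψ2 0 h0).1 (hψ2 0 h0).2).1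
    nlinarith [mul_le_mul_of_nonneg_left b2 hδ.le, mul_le_mul_of_nonneg_left b3 hδ.le,
      mul_nonneg hδ.le b1, mul_nonneg hδ.le b4]
  have hlim : ∀ t ∈ Icc 0 T, Tendsto
      (fun n : ℕ => ∫ x, cutoff N (n + 1) x ^ 2 * (w t x * ψ t x)) atTop
      (nhds (∫ x, w t x * ψ t x)) := by
    intro t ht
    have hn : ∀ n : ℕ, (1 : ℝ) ≤ (n : ℝ) + 1 := fun n => by
      linarith [(Nat.cast_nonneg n : (0 : ℝ) ≤ n)]
    refine tendsto_integral_of_dominated_convergence (fun x => ‖w t x * ψ t x‖)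
      (fun n => (hcut (hn n) _ (hwψ t ht)).1) (hwψ t ht).norm
      (fun n => Eventually.of_forall fun x => ?_) (Eventually.of_forall fun x => ?_)
    · rw [norm_mul, Real.norm_of_nonneg (sq_nonneg _)]
      exact mul_le_of_le_one_left (norm_nonneg _) (cutoff_sq_le_one (hn n) x)
    · simpa using ((tendsto_cutoff x).pow 2).mul_const (w t x * ψ t x)
  have hδlim : ∀ s : ℝ, s ^ 2 = 1 → ∀ δ : ℝ, 0 < δ →
      s * ((∫ x, w T x * ψ T x) - ∫ x, w 0 x * ψ 0 x) ≤ 2 * δ * C ^ 2 := by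
    intro s hs δ hδ
    have l1 := ((hlim T h1).sub (hlim 0 h0)).const_mul s
    have l2 : Tendsto (fun n : ℕ => 2 * δ * C ^ 2
        + (δ⁻¹ + 2 * δ) * cutoffModulus N α ω Λ (n + 1) * (2 * C ^ 2) * T) atTop
        (nhds (2 * δ * C ^ 2 + (δ⁻¹ + 2 * δ) * 0 * (2 * C ^ 2) * T)) :=
      (((((tendsto_cutoffModulus hN hΛ hω hωα hα).const_mul _).mul_const _).mul_const _)).const_add _
    have := le_of_tendsto_of_tendsto' l1 l2 fun n => hmain s hs δ hδ (n + 1)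
      (by linarith [(Nat.cast_nonneg n : (0 : ℝ) ≤ n)])
    simpa using this
  have hfin : ∀ s : ℝ, s ^ 2 = 1 →
      s * ((∫ x, w T x * ψ T x) - ∫ x, w 0 x * ψ 0 x) ≤ 0 := by
    intro s hs
    have l : Tendsto (fun δ : ℝ => 2 * δ * C ^ 2) (nhdsWithin 0 (Ioi 0)) (nhds 0) := by
      have : Continuous fun δ : ℝ => 2 * δ * C ^ 2 := by fun_prop
      have h := this.tendsto 0
      simp only [mul_zero, zero_mul] at h
      exact h.mono_left nhdsWithin_le_nhds
    refine ge_of_tendsto l ?_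
    filter_upwards [self_mem_nhdsWithin] with δ hδ
    exact hδlim s hs δ hδ
  have e1 := hfin 1 (by norm_num)
  have e2 := hfin (-1) (by norm_num)
  linarith

end Evolution

/-- Duality between a solution and a solution of the backward equation
(Lemma 2.6 of the paper): `∫ w₀·φ(T̄) = ∫ w(T̄)·φ₀`. -/
theorem forward_backward_duality
    (N : ℕ) (hN : 1 ≤ N)
    (α : ℝ) (hα0 : 0 < α) (hα2 : α < 2)
    (ζ : ℝ≥0∞) (hζ : 0 < ζ)
    (ω : ℝ) (hω0 : 0 ≤ ω) (hωα : ω < α)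
    (Λ : ℝ) (hΛ : 1 ≤ Λ)
    (ν : ℝ) (s₀ : ℝ≥0∞) (τ : ℝ)
    (hcase : 1 ≤ α → α - 1 < ν ∧ ν < 1 ∧ 0 < s₀ ∧ 0 ≤ τ ∧ ν + ω < min (N : ℝ) α)
    (γ A : ℝ) (hA : 1 ≤ A)
    (hγ1 : α < 1 → 0 < γ ∧ γ < α - ω)
    (hγ2 : 1 ≤ α → max (α - (N : ℝ)) 0 < γ ∧ γ < α - (ω + ν))
    (T : ℝ≥0∞)
    (K : ℝ → EuclideanSpace ℝ (Fin N) → EuclideanSpace ℝ (Fin N) → ℝ)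
    (hK : WeakStarKernel N T K α ζ ω Λ ν s₀ τ)
    (Tbar : ℝ) (hTbar0 : 0 < Tbar) (hTbarT : ENNReal.ofReal Tbar < T)
    (w φ : ℝ → EuclideanSpace ℝ (Fin N) → ℝ)
    (w₀ φ₀ : EuclideanSpace ℝ (Fin N) → ℝ)
    (r : ℝ) (hr0 : 0 < r) (hr1 : r ≤ 1)
    -- smooth initial data in L¹ ∩ L^∞
    (hw₀smooth : ContDiff ℝ (⊤ : ℕ∞) w₀) (hw₀L1 : Integrable w₀)
    (hw₀bdd : ∃ B : ℝ, ∀ x, |w₀ x| ≤ B)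
    (hφ₀smooth : ContDiff ℝ (⊤ : ℕ∞) φ₀) (hφ₀L1 : Integrable φ₀)
    (hφ₀bdd : ∃ B : ℝ, ∀ x, |φ₀ x| ≤ B)
    (hφ₀U : MemU N γ A r φ₀) (hφ₀S : IsSchwartz N φ₀)
    -- smoothness of the two solutions on [0,T̄] × ℝ^N
    (hwsmooth : ContDiffOn ℝ (⊤ : ℕ∞)
      (fun p : ℝ × EuclideanSpace ℝ (Fin N) => w p.1 p.2) (Set.Icc 0 Tbar ×ˢ Set.univ))
    (hφsmooth : ContDiffOn ℝ (⊤ : ℕ∞)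
      (fun p : ℝ × EuclideanSpace ℝ (Fin N) => φ p.1 p.2) (Set.Icc 0 Tbar ×ˢ Set.univ))
    -- w, φ ∈ L^∞(0,T̄;(L¹∩L^∞)(ℝ^N))
    (hwbdd : ∃ C : ℝ, ∀ t ∈ Set.Icc (0:ℝ) Tbar,
      (∫⁻ x, ENNReal.ofReal |w t x| ≤ ENNReal.ofReal C) ∧ ∀ x, |w t x| ≤ C)
    (hφbdd : ∃ C : ℝ, ∀ t ∈ Set.Icc (0:ℝ) Tbar,
      (∫⁻ x, ENNReal.ofReal |φ t x| ≤ ENNReal.ofReal C) ∧ ∀ x, |φ t x| ≤ C)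
    -- w solves the equation with kernel K on [0,T̄]
    (hwsol : ∀ t ∈ Set.Icc (0:ℝ) Tbar, ∀ x,
      ∃ L : ℝ, HasPVIntegral N K t (w t) x L ∧
        HasDerivWithinAt (fun s => w s x) (-L) (Set.Icc 0 Tbar) t)
    -- φ solves the equation with the backward kernel K^{(T̄)}(s,x,y) = K(T̄−s,x,y)
    (hφsol : ∀ t ∈ Set.Icc (0:ℝ) Tbar, ∀ x,
      ∃ L : ℝ, HasPVIntegral N (fun s x y => K (Tbar - s) x y) t (φ t) x L ∧
        HasDerivWithinAt (fun s => φ s x) (-L) (Set.Icc 0 Tbar) t)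
    -- initial data
    (hw0 : ∀ x, w 0 x = w₀ x) (hφ0 : ∀ x, φ 0 x = φ₀ x) :
    ∫ x, w₀ x * φ Tbar x = ∫ x, w Tbar x * φ₀ x := by
  obtain ⟨C₁, hC₁⟩ := hwbdd
  obtain ⟨C₂, hC₂⟩ := hφbdd
  -- `t ↦ T̄ - t` maps `[0,T̄]` to itself
  have hrefl : ∀ t ∈ Icc (0 : ℝ) Tbar, Tbar - t ∈ Icc (0 : ℝ) Tbar := fun t ht =>
    ⟨by linarith [ht.2], by linarith [ht.1]⟩
  have hgood : ∀ t ∈ Icc (0 : ℝ) Tbar, GoodKernel N α ω Λ (K t) := fun t ht =>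
    goodKernel_of_weakStar hN hα2 hω0 hωα hΛ hcase hK ht.1
      ((ENNReal.ofReal_le_ofReal ht.2).trans hTbarT.le)
  have h := pairing_conserved hN hΛ hω0 hωα hα2 hTbar0 hgood (w := w)
    (ψ := fun t => φ (Tbar - t)) hwsmooth
    (by
      refine hφsmooth.comp (g := fun p : ℝ × EuclideanSpace ℝ (Fin N) => φ p.1 p.2)
        (f := fun p : ℝ × EuclideanSpace ℝ (Fin N) => (Tbar - p.1, p.2))
        (by fun_prop) ?_
      rintro ⟨t, x⟩ ⟨ht, -⟩
      exact ⟨hrefl t ht, mem_univ x⟩)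
    (C := max C₁ C₂)
    (fun t ht => ⟨(hC₁ t ht).1.trans (ENNReal.ofReal_le_ofReal (le_max_left _ _)),
      fun x => ((hC₁ t ht).2 x).trans (le_max_left _ _)⟩)
    (fun t ht => ⟨(hC₂ _ (hrefl t ht)).1.trans (ENNReal.ofReal_le_ofReal (le_max_right _ _)),
      fun x => ((hC₂ _ (hrefl t ht)).2 x).trans (le_max_right _ _)⟩)
    hwsol
    (by
      intro t ht x
      obtain ⟨L, hL, hd⟩ := hφsol _ (hrefl t ht) x
      refine ⟨L, ?_, ?_⟩
      · simp only [HasPVIntegral, sub_sub_cancel] at hL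
        exact hL
      · have hsub : HasDerivWithinAt (fun s : ℝ => Tbar - s) (-1) (Icc 0 Tbar) t :=
          ((hasDerivAt_id t).const_sub Tbar).hasDerivWithinAt
        have hc := HasDerivWithinAt.comp t hd hsub fun s hs => hrefl s hs
        exact hc.congr_deriv (by ring))
  simp only [sub_zero, sub_self, hw0, hφ0] at h
  exact h

end
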